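/- For every δ ∈ (0,1) there exists κ ∈ (0,1) (depending only on δ) such that the following holds. Let G = (V,E) be a finite simple graph with maximum degree at most Δ, where Δ ≥ 3 is an integer, let μ be the hardcore model on G with fugacities satisfying λ_v ≤ (1−δ)·λ_Δ for all v, and let θ = 1/10. Then for every probability distribution ν on 2^V supported on independent sets of G, D(ν P^{SS} P^{FD}_θ ‖ μ) ≤ (1−κ)·D(ν ‖ μ), where P^{SS} is one pass of the systematic scan for μ (with respect to any fixed enumeration of V) and P^{FD}_θ is the field dynamics for μ at parameter θ. -/

import Mathlib

/-!
Throughout, `Δ = m + 2`, and hardcore models on induced subgraphs `G[U]` are handled through the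
weighted sums `wsum`.

A step of the field dynamics from `π` first pins each occupied site independently with probability
`1 - θ` and then resamples the rest. By the data-processing inequality the entropy after the step is
at most `pinKL π μ θ`, the relative entropy of the law of the pinned set (`KLdiv_fieldDyn_le`). The
systematic scan has stationary measure `μ`, so it does not increase the entropy (`scanDist_spec`).
It remains to show `pinKL π μ θ ≤ (1 - θ ^ C) * KLdiv π μ` with `C = C(δ)`, and `κ = (1/10) ^ C`
works.

Running the pinning continuously in `s` from `1` down to `θ`, the derivative of `pinKL` is a sum of
one-site relative entropies over all pinnings `T`. *Entropic independence* (`EntIndep`) bounds it by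
`C / s` times the entropy not yet revealed, and integration gives the contraction (`pinKL_le`).
Entropic independence of a pinned and tilted model is dual to the generating-function inequality

`Z(λ x) ≤ Z(λ) * exp ((1/C) * ∑ i, p i * (x i ^ C - 1))`,  where `p i` is the occupation probability

(`entIndep_of_gen`), and a pinned and tilted hardcore model is again a subcritical hardcore model on
the free sites (`pin_hardcore`). The inequality itself is `zsum_mul_le`. For `x = exp w` with `w`
small it is a second-order Taylor bound on `log Z`, where the second derivative is the variance of a
linear statistic and is controlled by spectral independence (`variance_le`). Large `x` are clipped,
using that `log Z` is `1`-Lipschitz in each fugacity and that `λ i ≤ exp 32 * p i`.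

Spectral independence follows from a bound on the total influence of a vertex (`tinfl_le`). Revealing
the neighbours of `r` one at a time yields a recursion for the influence with the same structure as
the recursion on a tree, without building the tree of self-avoiding walks (`tinfl_rec`), and below
the uniqueness threshold it contracts for the potential `√p` (`tree_contraction`).
-/

open Finset

noncomputable section
attribute [local instance] Classical.propDecidable

/-- Push a distribution `ν` one step through a Markov transition matrix `P`. -/
def stepDist {Ω : Type*} [Fintype Ω] (ν : Ω → ℝ) (P : Ω → Ω → ℝ) : Ω → ℝ :=
  fun y => ∑ x, ν x * P x y

/-- KL divergence `D(ν‖μ) = Σ_x ν(x) log(ν(x)/μ(x))`. -/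
def KLdiv {Ω : Type*} [Fintype Ω] (ν μ : Ω → ℝ) : ℝ :=
  ∑ x, ν x * Real.log (ν x / μ x)

variable {V : Type*} [Fintype V] [DecidableEq V]

/-- `σ` is an independent set of `G`: no two of its elements are adjacent. -/
def IndepSet (G : SimpleGraph V) (σ : Finset V) : Prop :=
  ∀ u ∈ σ, ∀ w ∈ σ, ¬ G.Adj u w

/-- Unnormalized hardcore weight of `σ`: `∏_{v ∈ σ} λ_v` if `σ` is independent, else `0`. -/
def hcWeight (G : SimpleGraph V) (lam : V → ℝ) (σ : Finset V) : ℝ :=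
  if IndepSet G σ then ∏ v ∈ σ, lam v else 0

/-- The hardcore model on `G` with fugacities `lam`, as a distribution on `Finset V`. -/
def hardcore (G : SimpleGraph V) (lam : V → ℝ) (σ : Finset V) : ℝ :=
  hcWeight G lam σ / ∑ τ : Finset V, hcWeight G lam τ

/-- The tree-uniqueness threshold `λ_Δ = (Δ−1)^{Δ−1}/(Δ−2)^Δ`. -/
def hcCrit (Δ : ℕ) : ℝ := ((Δ : ℝ) - 1) ^ (Δ - 1) / ((Δ : ℝ) - 2) ^ Δ

/-- Glauber single-site update at `v`: resample the membership of `v` from the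
conditional distribution of `μ` given the configuration on `V ∖ {v}`. -/
def siteUpdate (μ : Finset V → ℝ) (v : V) (σ τ : Finset V) : ℝ :=
  if τ.erase v = σ.erase v then
    μ τ / (μ (insert v (σ.erase v)) + μ (σ.erase v))
  else 0

/-- Push a distribution through the single-site updates along the list `l`
(one pass of the systematic scan when `l` enumerates `V`). -/
def scanDist (μ : Finset V → ℝ) (l : List V) (ν : Finset V → ℝ) : Finset V → ℝ :=
  l.foldl (fun ρ v => stepDist ρ (siteUpdate μ v)) ν

/-- Unnormalized weight of the tilt `θ∗μ`: `(θ∗μ)(τ) ∝ θ^{|τ|} μ(τ)`. -/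
def hcTiltWeight (θ : ℝ) (μ : Finset V → ℝ) (τ : Finset V) : ℝ :=
  θ ^ τ.card * μ τ

/-- The field dynamics at parameter `θ`: from state `σ`, pick `S ⊇ V ∖ σ` by keeping
each occupied site with probability `θ` (unoccupied sites always), then resample the
configuration on `S` from `θ∗μ` conditioned on all sites of `V ∖ S` being occupied. -/
def fieldDyn (θ : ℝ) (μ : Finset V → ℝ) (σ σ' : Finset V) : ℝ :=
  ∑ S : Finset V,
    (if univ \ σ ⊆ S then θ ^ (S ∩ σ).card * (1 - θ) ^ (σ \ S).card else 0) *
      ((if univ \ S ⊆ σ' then hcTiltWeight θ μ σ' else 0) /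
        ∑ τ ∈ univ.filter (fun τ : Finset V => univ \ S ⊆ τ), hcTiltWeight θ μ τ)

set_option linter.unusedSectionVars false

/-! ### Hardcore models on induced subgraphs and influences -/

/-- Weighted sum `∑ w(σ) f(σ)` over the independent sets `σ` contained in `U`. -/
def wsum (G : SimpleGraph V) (lam : V → ℝ) (U : Finset V) (f : Finset V → ℝ) : ℝ :=
  ∑ σ ∈ U.powerset, hcWeight G lam σ * f σ

/-- Partition function of the hardcore model on the induced subgraph `G[U]`. -/
def zsum (G : SimpleGraph V) (lam : V → ℝ) (U : Finset V) : ℝ :=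
  wsum G lam U fun _ => 1

/-- Probability that `u` is occupied in the hardcore model on `G[U]` (zero if `u ∉ U`). -/
def occ (G : SimpleGraph V) (lam : V → ℝ) (U : Finset V) (u : V) : ℝ :=
  wsum G lam U (fun σ => if u ∈ σ then 1 else 0) / zsum G lam U

/-- `U` with the closed neighbourhood of `r` removed. -/
def del (G : SimpleGraph V) (U : Finset V) (r : V) : Finset V :=
  U.filter fun u => u ≠ r ∧ ¬ G.Adj r u

lemma indepSet_insert (G : SimpleGraph V) (r : V) (σ : Finset V) :
    IndepSet G (insert r σ) ↔ IndepSet G σ ∧ ∀ u ∈ σ, ¬ G.Adj r u := by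
  simp only [IndepSet, Finset.mem_insert]
  constructor
  · intro h
    exact ⟨fun u hu w hw => h u (Or.inr hu) w (Or.inr hw), fun u hu => h r (Or.inl rfl) u (Or.inr hu)⟩
  · rintro ⟨h1, h2⟩ u (rfl | hu) w (rfl | hw)
    · exact G.loopless.irrefl _
    · exact h2 w hw
    · exact fun h => h2 u hu h.symm
    · exact h1 u hu w hw

lemma hcWeight_insert (G : SimpleGraph V) (lam : V → ℝ) {r : V} {σ : Finset V} (hr : r ∉ σ) :
    hcWeight G lam (insert r σ) =
      if ∀ u ∈ σ, ¬ G.Adj r u then lam r * hcWeight G lam σ else 0 := by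
  unfold hcWeight
  by_cases h : ∀ u ∈ σ, ¬ G.Adj r u
  · by_cases h' : IndepSet G σ
    · rw [if_pos ((indepSet_insert G r σ).2 ⟨h', h⟩), if_pos h, if_pos h', Finset.prod_insert hr]
    · rw [if_neg fun h2 => h' ((indepSet_insert G r σ).1 h2).1, if_pos h, if_neg h', mul_zero]
  · rw [if_neg fun h2 => h ((indepSet_insert G r σ).1 h2).2, if_neg h]

lemma hcWeight_nonneg (G : SimpleGraph V) {lam : V → ℝ} (hl : ∀ v, 0 ≤ lam v) (σ : Finset V) :
    0 ≤ hcWeight G lam σ := by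
  unfold hcWeight
  split_ifs
  · exact Finset.prod_nonneg fun v _ => hl v
  · exact le_rfl

lemma hcWeight_empty (G : SimpleGraph V) (lam : V → ℝ) : hcWeight G lam ∅ = 1 := by
  simp [hcWeight, IndepSet]

/-- Conditioning on whether `r` is occupied: the basic recursion of the hardcore model. -/
lemma wsum_rec (G : SimpleGraph V) (lam : V → ℝ) {U : Finset V} {r : V} (hr : r ∈ U)
    (f : Finset V → ℝ) :
    wsum G lam U f =
      wsum G lam (U.erase r) f + lam r * wsum G lam (del G U r) (fun σ => f (insert r σ)) := by
  have hU : wsum G lam U f = wsum G lam (insert r (U.erase r)) f := by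
    rw [Finset.insert_erase hr]
  rw [hU]
  unfold wsum
  rw [Finset.sum_powerset_insert (Finset.notMem_erase r U)]
  congr 1
  rw [Finset.mul_sum]
  symm
  have hsub : (del G U r).powerset ⊆ (U.erase r).powerset := by
    apply Finset.powerset_mono.2
    intro u hu
    simp only [del, Finset.mem_filter] at hu
    exact Finset.mem_erase.2 ⟨hu.2.1, hu.1⟩
  have key : ∀ σ ∈ (U.erase r).powerset, hcWeight G lam (insert r σ) =
      if ∀ u ∈ σ, ¬ G.Adj r u then lam r * hcWeight G lam σ else 0 := by
    intro σ hσ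
    apply hcWeight_insert
    intro h
    exact Finset.notMem_erase r U (Finset.mem_powerset.1 hσ h)
  rw [← Finset.sum_subset hsub (f := fun σ => hcWeight G lam (insert r σ) * f (insert r σ))]
  · apply Finset.sum_congr rfl
    intro σ hσ
    rw [key σ (hsub hσ), if_pos]
    · ring
    · intro u hu
      have := Finset.mem_powerset.1 hσ hu
      simp only [del, Finset.mem_filter] at this
      exact this.2.2
  · intro σ hσ hσ'
    rw [key σ hσ, if_neg, zero_mul]
    intro h
    apply hσ'
    rw [Finset.mem_powerset]
    intro u hu
    have := Finset.mem_erase.1 (Finset.mem_powerset.1 hσ hu)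
    simp only [del, Finset.mem_filter]
    exact ⟨this.2, this.1, h u hu⟩

lemma zsum_rec (G : SimpleGraph V) (lam : V → ℝ) {U : Finset V} {r : V} (hr : r ∈ U) :
    zsum G lam U = zsum G lam (U.erase r) + lam r * zsum G lam (del G U r) :=
  wsum_rec G lam hr _

lemma zsum_pos (G : SimpleGraph V) {lam : V → ℝ} (hl : ∀ v, 0 ≤ lam v) (U : Finset V) :
    0 < zsum G lam U := by
  unfold zsum wsum
  have h : hcWeight G lam ∅ * 1 ≤ ∑ σ ∈ U.powerset, hcWeight G lam σ * 1 :=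
    Finset.single_le_sum (f := fun σ => hcWeight G lam σ * 1)
      (fun σ _ => by simpa using hcWeight_nonneg G hl σ) (Finset.empty_mem_powerset U)
  rw [hcWeight_empty] at h
  linarith

lemma zsum_mono (G : SimpleGraph V) {lam : V → ℝ} (hl : ∀ v, 0 ≤ lam v) {U U' : Finset V}
    (h : U ⊆ U') : zsum G lam U ≤ zsum G lam U' := by
  unfold zsum wsum
  apply Finset.sum_le_sum_of_subset_of_nonneg (Finset.powerset_mono.2 h)
  intro σ _ _
  simpa using hcWeight_nonneg G hl σ

lemma del_subset_erase (G : SimpleGraph V) (U : Finset V) (r : V) : del G U r ⊆ U.erase r := by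
  intro u hu
  simp only [del, Finset.mem_filter] at hu
  exact Finset.mem_erase.2 ⟨hu.2.1, hu.1⟩

lemma occ_nonneg (G : SimpleGraph V) {lam : V → ℝ} (hl : ∀ v, 0 ≤ lam v) (U : Finset V) (u : V) :
    0 ≤ occ G lam U u := by
  unfold occ
  apply div_nonneg _ (zsum_pos G hl U).le
  apply Finset.sum_nonneg
  intro σ _
  apply mul_nonneg (hcWeight_nonneg G hl σ)
  beta_reduce
  split_ifs <;> norm_num

lemma wsum_ind_eq_zero (G : SimpleGraph V) (lam : V → ℝ) {U : Finset V} {u : V} (hu : u ∉ U) :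
    wsum G lam U (fun σ => if u ∈ σ then 1 else 0) = 0 := by
  apply Finset.sum_eq_zero
  intro σ hσ
  beta_reduce
  rw [if_neg fun h => hu (Finset.mem_powerset.1 hσ h), mul_zero]

lemma occ_eq_zero (G : SimpleGraph V) (lam : V → ℝ) {U : Finset V} {u : V} (hu : u ∉ U) :
    occ G lam U u = 0 := by
  rw [occ, wsum_ind_eq_zero G lam hu, zero_div]

lemma wsum_ind_self (G : SimpleGraph V) (lam : V → ℝ) {U : Finset V} {r : V} (hr : r ∈ U) :
    wsum G lam U (fun σ => if r ∈ σ then 1 else 0) = lam r * zsum G lam (del G U r) := by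
  rw [wsum_rec G lam hr, wsum_ind_eq_zero G lam (Finset.notMem_erase r U), zero_add]
  simp [zsum]

lemma occ_self (G : SimpleGraph V) (lam : V → ℝ) {U : Finset V} {r : V} (hr : r ∈ U) :
    occ G lam U r = lam r * zsum G lam (del G U r) / zsum G lam U := by
  rw [occ, wsum_ind_self G lam hr]

lemma occ_le_lam (G : SimpleGraph V) {lam : V → ℝ} (hl : ∀ v, 0 ≤ lam v) (U : Finset V) (u : V) :
    occ G lam U u ≤ lam u := by
  by_cases hu : u ∈ U
  · rw [occ_self G lam hu, div_le_iff₀ (zsum_pos G hl U)]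
    exact mul_le_mul_of_nonneg_left
      (zsum_mono G hl ((del_subset_erase G U u).trans (Finset.erase_subset _ _))) (hl u)
  · rw [occ_eq_zero G lam hu]
    exact hl u

lemma one_sub_occ (G : SimpleGraph V) {lam : V → ℝ} (hl : ∀ v, 0 ≤ lam v) {U : Finset V} {r : V}
    (hr : r ∈ U) : 1 - occ G lam U r = zsum G lam (U.erase r) / zsum G lam U := by
  have h := zsum_pos G hl U
  rw [occ_self G lam hr, eq_div_iff h.ne', sub_mul, div_mul_cancel₀ _ h.ne', zsum_rec G lam hr]
  ring

lemma occ_lt_one (G : SimpleGraph V) {lam : V → ℝ} (hl : ∀ v, 0 ≤ lam v) (U : Finset V) (u : V) :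
    occ G lam U u < 1 := by
  by_cases hu : u ∈ U
  · have h := one_sub_occ G hl hu
    have := div_pos (zsum_pos G hl (U.erase u)) (zsum_pos G hl U)
    linarith
  · rw [occ_eq_zero G lam hu]
    norm_num

/-- The influence of `r` on `u` in the hardcore model on `G[U]`, for `r ∈ U`: the probability that
`u` is occupied given that `r` is, minus the same probability given that `r` is vacant. -/
def infl (G : SimpleGraph V) (lam : V → ℝ) (U : Finset V) (r u : V) : ℝ :=
  if u = r then 1 else occ G lam (del G U r) u - occ G lam (U.erase r) u

/-- Total absolute influence of `r` in `G[U]`. -/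
def tinfl (G : SimpleGraph V) (lam : V → ℝ) (U : Finset V) (r : V) : ℝ :=
  ∑ u, |infl G lam U r u|

lemma tinfl_nonneg (G : SimpleGraph V) (lam : V → ℝ) (U : Finset V) (r : V) :
    0 ≤ tinfl G lam U r := Finset.sum_nonneg fun _ _ => abs_nonneg _

/-- Law of total probability, in the form used to telescope over the neighbours of a vertex. -/
lemma occ_erase_sub (G : SimpleGraph V) {lam : V → ℝ} (hl : ∀ v, 0 ≤ lam v) {U : Finset V} {r : V}
    (hr : r ∈ U) (u : V) :
    occ G lam (U.erase r) u - occ G lam U u = - (occ G lam U r * infl G lam U r u) := by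
  by_cases hu : u = r
  · subst hu
    simp [infl, occ_eq_zero G lam (Finset.notMem_erase u U)]
  · have h1 : wsum G lam U (fun σ => if u ∈ σ then 1 else 0) =
        wsum G lam (U.erase r) (fun σ => if u ∈ σ then 1 else 0) +
          lam r * wsum G lam (del G U r) (fun σ => if u ∈ σ then 1 else 0) := by
      rw [wsum_rec G lam hr]
      simp [Finset.mem_insert, hu]
    have h2 := one_sub_occ G hl hr
    have h0 := zsum_pos G hl U
    have h3 := zsum_pos G hl (U.erase r)
    have h4 := zsum_pos G hl (del G U r)
    have h5 := zsum_rec G lam hr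
    simp only [infl, if_neg hu]
    rw [occ_self G lam hr]
    unfold occ
    rw [h1]
    field_simp
    rw [h5]
    ring

lemma wsum_pair (G : SimpleGraph V) (lam : V → ℝ) {U : Finset V} {r u : V} (hr : r ∈ U)
    (hu : u ≠ r) :
    wsum G lam U (fun σ => (if r ∈ σ then 1 else 0) * (if u ∈ σ then 1 else 0)) =
      lam r * wsum G lam (del G U r) (fun σ => if u ∈ σ then 1 else 0) := by
  rw [wsum_rec G lam hr]
  have : wsum G lam (U.erase r)
      (fun σ => (if r ∈ σ then (1:ℝ) else 0) * (if u ∈ σ then 1 else 0)) = 0 := by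
    apply Finset.sum_eq_zero
    intro σ hσ
    beta_reduce
    rw [if_neg fun h => Finset.notMem_erase r U (Finset.mem_powerset.1 hσ h), zero_mul, mul_zero]
  rw [this, zero_add]
  simp [Finset.mem_insert, hu]

/-- Covariance of the occupations of `r` and `u` in terms of the influence of `r` on `u`. -/
lemma cov_eq_infl (G : SimpleGraph V) {lam : V → ℝ} (hl : ∀ v, 0 ≤ lam v) {U : Finset V} {r : V}
    (hr : r ∈ U) (u : V) :
    wsum G lam U (fun σ => (if r ∈ σ then 1 else 0) * (if u ∈ σ then 1 else 0)) / zsum G lam U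
        - occ G lam U r * occ G lam U u =
      occ G lam U r * (1 - occ G lam U r) * infl G lam U r u := by
  by_cases hu : u = r
  · subst hu
    have : (fun σ : Finset V => (if u ∈ σ then (1:ℝ) else 0) * (if u ∈ σ then 1 else 0)) =
        fun σ => if u ∈ σ then 1 else 0 := by
      funext σ
      split_ifs <;> norm_num
    rw [this, infl, if_pos rfl]
    change occ G lam U u - _ = _
    ring
  · have h1 := occ_erase_sub G hl hr u
    have h2 : wsum G lam U (fun σ => (if r ∈ σ then 1 else 0) * (if u ∈ σ then 1 else 0))
        / zsum G lam U = occ G lam U r * occ G lam (del G U r) u := by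
      rw [wsum_pair G lam hr hu, occ_self G lam hr]
      unfold occ
      have := zsum_pos G hl (del G U r)
      field_simp
    rw [h2]
    have h3 : occ G lam (del G U r) u = infl G lam U r u + occ G lam (U.erase r) u := by
      simp [infl, hu]
    rw [h3]
    linear_combination (occ G lam U r) * h1

/-! ### Contraction of the tree recursion and spectral independence -/

lemma hcCrit_eq (m : ℕ) : hcCrit (m + 2) = ((m : ℝ) + 1) ^ (m + 1) / (m : ℝ) ^ (m + 2) := by
  unfold hcCrit
  push_cast
  congr 2 <;> ring

lemma hcCrit_pos {m : ℕ} (hm : 1 ≤ m) : 0 < hcCrit (m + 2) := by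
  rw [hcCrit_eq]
  have : (0 : ℝ) < m := by exact_mod_cast hm
  positivity

lemma hcCrit_mul_le {m : ℕ} (hm : 1 ≤ m) : hcCrit (m + 2) * m ≤ 8 := by
  have hm0 : (1 : ℝ) ≤ m := by exact_mod_cast hm
  have h1 : hcCrit (m + 2) * m = (1 + 1 / (m : ℝ)) ^ (m + 1) := by
    rw [hcCrit_eq]
    have : 1 + 1 / (m : ℝ) = (m + 1) / m := by field_simp
    rw [this, div_pow]
    field_simp
    ring
  have h2 : (1 + 1 / (m : ℝ)) ≤ Real.exp (1 / m) := by
    have := Real.add_one_le_exp (1 / (m : ℝ))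
    linarith
  have h3 : (1 + 1 / (m : ℝ)) ^ (m + 1) ≤ Real.exp (1 / m) ^ (m + 1) :=
    pow_le_pow_left₀ (by positivity) h2 _
  have h4 : Real.exp (1 / (m : ℝ)) ^ (m + 1) ≤ Real.exp 2 := by
    rw [← Real.exp_nat_mul]
    apply Real.exp_le_exp.2
    push_cast
    rw [mul_one_div, div_le_iff₀ (by linarith)]
    linarith
  have h5 : Real.exp 2 ≤ 8 := by
    have h := Real.exp_one_lt_d9
    have : Real.exp 2 = Real.exp 1 * Real.exp 1 := by
      rw [← Real.exp_add]
      norm_num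
    rw [this]
    nlinarith [Real.exp_pos 1]
  linarith

lemma hcCrit_le {m : ℕ} (hm : 1 ≤ m) : hcCrit (m + 2) ≤ 8 := by
  have hm0 : (1 : ℝ) ≤ m := by exact_mod_cast hm
  nlinarith [hcCrit_mul_le hm, hcCrit_pos hm]

lemma hcCrit_mul_le' {m : ℕ} (hm : 1 ≤ m) : hcCrit (m + 2) * (m + 3) ≤ 32 := by
  have hm0 : (1 : ℝ) ≤ m := by exact_mod_cast hm
  nlinarith [hcCrit_mul_le hm, hcCrit_le hm]

/-- Below the threshold the one-step tree recursion contracts: with `R = λ ∏ (1 - p_a)`, the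
potential-weighted derivative `√(R/(1+R)) ∑ √p_a` has square at most `1 - δ/9`. Each factor `1 - p_a`
is bounded by the exponential tangent to it at the critical point `p = 1/(m+1)`. -/
lemma tree_contraction {ι : Type*} (A : Finset ι) (p : ι → ℝ) {m : ℕ} (hm : 1 ≤ m)
    (hA : A.card ≤ m + 1) (hp0 : ∀ a ∈ A, 0 ≤ p a) (hp1 : ∀ a ∈ A, p a < 1)
    {δ lam : ℝ} (hδ0 : 0 < δ) (hδ1 : δ < 1) (hl0 : 0 < lam)
    (hl : lam ≤ (1 - δ) * hcCrit (m + 2)) :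
    (lam * ∏ a ∈ A, (1 - p a)) / (1 + lam * ∏ a ∈ A, (1 - p a)) * (∑ a ∈ A, √(p a)) ^ 2
      ≤ 1 - δ / 9 := by
  have hm0 : (1 : ℝ) ≤ m := by exact_mod_cast hm
  have hmp : (0 : ℝ) < m := by linarith
  set P := ∑ a ∈ A, p a with hP
  set R := lam * ∏ a ∈ A, (1 - p a) with hR
  have hprod0 : 0 ≤ ∏ a ∈ A, (1 - p a) :=
    Finset.prod_nonneg fun a ha => by linarith [hp1 a ha]
  have hprod1 : ∏ a ∈ A, (1 - p a) ≤ 1 :=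
    Finset.prod_le_one (fun a ha => by linarith [hp1 a ha]) (fun a ha => by linarith [hp0 a ha])
  have hP0 : 0 ≤ P := Finset.sum_nonneg hp0
  have hR0 : 0 ≤ R := mul_nonneg hl0.le hprod0
  have hlc : lam ≤ hcCrit (m + 2) := by nlinarith [hcCrit_pos hm]
  have hR8 : R ≤ 8 := by
    have := hcCrit_le hm
    nlinarith
  have hcs : (∑ a ∈ A, √(p a)) ^ 2 ≤ (m + 1) * P := by
    have h1 := sq_sum_le_card_mul_sum_sq (s := A) (f := fun a => √(p a))
    have h2 : ∑ a ∈ A, √(p a) ^ 2 = P :=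
      Finset.sum_congr rfl fun a ha => Real.sq_sqrt (hp0 a ha)
    rw [h2] at h1
    have h3 : (A.card : ℝ) ≤ m + 1 := by exact_mod_cast hA
    exact h1.trans (mul_le_mul_of_nonneg_right h3 hP0)
  -- with `R ≤ 8` this rearranges to the claim; equality at `δ = 0` is attained at `P = 1`
  have hmain : R * ((m + 1) * P - 1) ≤ 1 - δ := by
    by_cases hneg : ((m : ℝ) + 1) * P - 1 ≤ 0
    · have := mul_nonneg hR0 (neg_nonneg.2 hneg)
      linarith
    push Not at hneg
    set c := (m : ℝ) / (m + 1) * Real.exp (1 / m) with hc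
    have hc1 : 1 ≤ c := by
      have h := Real.add_one_le_exp (1 / (m : ℝ))
      have h' : (1 : ℝ) = m / (m + 1) * (1 / m + 1) := by
        field_simp
        ring
      rw [hc]
      calc (1 : ℝ) = m / (m + 1) * (1 / m + 1) := h'
        _ ≤ _ := mul_le_mul_of_nonneg_left h (by positivity)
    have hfac : ∀ a ∈ A, 1 - p a ≤ c * Real.exp (-((m + 1) / m * p a)) := by
      intro a _
      have h := Real.add_one_le_exp (1 / (m : ℝ) + -((m + 1) / m * p a))
      rw [Real.exp_add] at h
      calc 1 - p a = m / (m + 1) * (1 / (m : ℝ) + -((m + 1) / m * p a) + 1) := by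
            field_simp
            ring
        _ ≤ m / (m + 1) * (Real.exp (1 / m) * Real.exp (-((m + 1) / m * p a))) :=
            mul_le_mul_of_nonneg_left h (by positivity)
        _ = _ := by rw [hc]; ring
    have hprod : ∏ a ∈ A, (1 - p a) ≤ c ^ (m + 1) * Real.exp (-((m + 1) / m * P)) := by
      calc ∏ a ∈ A, (1 - p a) ≤ ∏ a ∈ A, (c * Real.exp (-((m + 1) / m * p a))) :=
            Finset.prod_le_prod (fun a ha => by linarith [hp1 a ha]) hfac
        _ = c ^ A.card * Real.exp (-((m + 1) / m * P)) := by
            rw [Finset.prod_mul_distrib, Finset.prod_const, ← Real.exp_sum,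
              Finset.sum_neg_distrib, ← Finset.mul_sum]
        _ ≤ _ := mul_le_mul_of_nonneg_right (pow_le_pow_right₀ hc1 hA) (Real.exp_pos _).le
    have hlin : ((m : ℝ) + 1) * P - 1 ≤ m * Real.exp ((m + 1) / m * (P - 1)) := by
      have h := Real.add_one_le_exp (((m : ℝ) + 1) / m * (P - 1))
      calc ((m : ℝ) + 1) * P - 1 = m * ((m + 1) / m * (P - 1) + 1) := by
            field_simp
            ring
        _ ≤ _ := mul_le_mul_of_nonneg_left h hmp.le
    have hexp : Real.exp (1 / (m : ℝ)) ^ (m + 1) * Real.exp (-((m + 1) / m * P)) *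
        Real.exp ((m + 1) / m * (P - 1)) = 1 := by
      rw [← Real.exp_nat_mul, ← Real.exp_add, ← Real.exp_add, Real.exp_eq_one_iff]
      push_cast
      field_simp
      ring
    calc R * ((m + 1) * P - 1)
        ≤ (lam * (c ^ (m + 1) * Real.exp (-((m + 1) / m * P)))) *
            (m * Real.exp ((m + 1) / m * (P - 1))) := by
          apply mul_le_mul (mul_le_mul_of_nonneg_left hprod hl0.le) hlin hneg.le
          have : 0 < c := by linarith
          positivity
      _ = lam * ((m / (m + 1)) ^ (m + 1) * m) *
          (Real.exp (1 / (m : ℝ)) ^ (m + 1) * Real.exp (-((m + 1) / m * P)) *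
            Real.exp ((m + 1) / m * (P - 1))) := by
          rw [hc, mul_pow]
          ring
      _ = lam * ((m / (m + 1)) ^ (m + 1) * m) := by rw [hexp, mul_one]
      _ ≤ ((1 - δ) * hcCrit (m + 2)) * ((m / (m + 1)) ^ (m + 1) * m) :=
          mul_le_mul_of_nonneg_right hl (by positivity)
      _ = 1 - δ := by
          rw [hcCrit_eq, div_pow]
          field_simp
          ring
  rw [div_mul_eq_mul_div, div_le_iff₀ (by linarith)]
  nlinarith [mul_le_mul_of_nonneg_left hcs hR0]

/-- Removing the vertices of `A` from `U` one at a time. The vertex `a` is removed from some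
`U' ⊆ U`, where it has occupation probability `p a` and total influence `S a`. -/
lemma telescope (G : SimpleGraph V) {lam : V → ℝ} (hl : ∀ v, 0 ≤ lam v) (U A : Finset V)
    (hA : A ⊆ U) :
    ∃ p S : V → ℝ,
      (∀ a ∈ A, ∃ U' ⊆ U, a ∈ U' ∧ p a = occ G lam U' a ∧ S a = tinfl G lam U' a) ∧
      zsum G lam (U \ A) = zsum G lam U * ∏ a ∈ A, (1 - p a) ∧
      ∑ u, |occ G lam (U \ A) u - occ G lam U u| ≤ ∑ a ∈ A, p a * S a := by
  induction A using Finset.induction_on with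
  | empty => exact ⟨0, 0, by simp⟩
  | insert a A ha ih =>
    obtain ⟨p, S, h1, h2, h3⟩ := ih ((Finset.subset_insert a A).trans hA)
    have haU : a ∈ U \ A := Finset.mem_sdiff.2 ⟨hA (Finset.mem_insert_self a A), ha⟩
    have hset : U \ insert a A = (U \ A).erase a := by
      ext x
      simp only [Finset.mem_sdiff, Finset.mem_insert, Finset.mem_erase]
      tauto
    have hne : ∀ b ∈ A, b ≠ a := fun b hb h => ha (h ▸ hb)
    refine ⟨Function.update p a (occ G lam (U \ A) a),
      Function.update S a (tinfl G lam (U \ A) a), ?_, ?_, ?_⟩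
    · intro b hb
      rcases Finset.mem_insert.1 hb with rfl | hb
      · exact ⟨U \ A, Finset.sdiff_subset, haU, by simp, by simp⟩
      · rw [Function.update_of_ne (hne b hb), Function.update_of_ne (hne b hb)]
        exact h1 b hb
    · rw [Finset.prod_insert ha, Function.update_self]
      have : ∏ x ∈ A, (1 - Function.update p a (occ G lam (U \ A) a) x) = ∏ x ∈ A, (1 - p x) :=
        Finset.prod_congr rfl fun b hb => by rw [Function.update_of_ne (hne b hb)]
      rw [this, one_sub_occ G hl haU, hset, mul_left_comm, ← h2]
      have := zsum_pos G hl (U \ A)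
      field_simp
    · rw [Finset.sum_insert ha, Function.update_self, Function.update_self]
      have : ∑ x ∈ A, Function.update p a (occ G lam (U \ A) a) x *
          Function.update S a (tinfl G lam (U \ A) a) x = ∑ x ∈ A, p x * S x :=
        Finset.sum_congr rfl fun b hb => by
          rw [Function.update_of_ne (hne b hb), Function.update_of_ne (hne b hb)]
      rw [this, hset]
      have hstep : ∑ u, |occ G lam ((U \ A).erase a) u - occ G lam (U \ A) u| =
          occ G lam (U \ A) a * tinfl G lam (U \ A) a := by
        rw [tinfl, Finset.mul_sum]
        apply Finset.sum_congr rfl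
        intro u _
        rw [occ_erase_sub G hl haU u, abs_neg, abs_mul, abs_of_nonneg (occ_nonneg G hl _ _)]
      rw [← hstep]
      refine le_trans ?_ (add_le_add le_rfl h3)
      rw [← Finset.sum_add_distrib]
      exact Finset.sum_le_sum fun u _ => abs_sub_le _ _ _

/-- Neighbours of `r` inside `U`. -/
def nbrs (G : SimpleGraph V) (U : Finset V) (r : V) : Finset V := U.filter fun u => G.Adj r u

lemma erase_sdiff_nbrs (G : SimpleGraph V) (U : Finset V) (r : V) :
    (U.erase r) \ nbrs G (U.erase r) r = del G U r := by
  ext x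
  simp only [nbrs, del, Finset.mem_sdiff, Finset.mem_erase, Finset.mem_filter]
  tauto

/-- A neighbour `a` of a removed vertex `r` has lost at least one neighbour. -/
lemma nbrs_card_le (G : SimpleGraph V) {m : ℕ} {r a : V} {U U' : Finset V}
    (hdeg : (nbrs G Finset.univ a).card ≤ m + 2) (hra : G.Adj r a) (hU' : U' ⊆ U.erase r) :
    (nbrs G U' a).card ≤ m + 1 := by
  have hr : r ∈ nbrs G Finset.univ a := by
    simp only [nbrs, Finset.mem_filter, Finset.mem_univ, true_and]
    exact hra.symm
  have hsub : nbrs G U' a ⊆ (nbrs G Finset.univ a).erase r := by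
    intro x hx
    simp only [nbrs, Finset.mem_filter] at hx
    simp only [nbrs, Finset.mem_erase, Finset.mem_filter, Finset.mem_univ, true_and]
    exact ⟨(Finset.mem_erase.1 (hU' hx.1)).1, hx.2⟩
  have h := Finset.card_le_card hsub
  rw [Finset.card_erase_of_mem hr] at h
  omega

/-- The recursion for the total influence, together with the tree recursion for the occupation
probability. -/
lemma tinfl_rec (G : SimpleGraph V) {lam : V → ℝ} (hl : ∀ v, 0 < lam v) {U : Finset V} {r : V}
    (hr : r ∈ U) :
    ∃ p S : V → ℝ,
      (∀ a ∈ nbrs G (U.erase r) r, ∃ U' ⊆ U.erase r, a ∈ U' ∧ p a = occ G lam U' a ∧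
        S a = tinfl G lam U' a) ∧
      occ G lam U r = (lam r * ∏ a ∈ nbrs G (U.erase r) r, (1 - p a)) /
        (1 + lam r * ∏ a ∈ nbrs G (U.erase r) r, (1 - p a)) ∧
      tinfl G lam U r ≤ 1 + ∑ a ∈ nbrs G (U.erase r) r, p a * S a := by
  have hl' : ∀ v, 0 ≤ lam v := fun v => (hl v).le
  obtain ⟨p, S, h1, h2, h3⟩ := telescope G hl' (U.erase r) (nbrs G (U.erase r) r)
    (Finset.filter_subset _ _)
  rw [erase_sdiff_nbrs] at h2 h3
  refine ⟨p, S, h1, ?_, ?_⟩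
  · rw [occ_self G lam hr, zsum_rec G lam hr, h2]
    have h0 := zsum_pos G hl' (U.erase r)
    rw [show zsum G lam (U.erase r) + lam r * (zsum G lam (U.erase r) *
      ∏ a ∈ nbrs G (U.erase r) r, (1 - p a)) = zsum G lam (U.erase r) *
        (1 + lam r * ∏ a ∈ nbrs G (U.erase r) r, (1 - p a)) by ring, mul_left_comm,
      mul_div_mul_left _ _ h0.ne']
  · refine le_trans ?_ (add_le_add le_rfl h3)
    unfold tinfl
    rw [← Finset.add_sum_erase _ _ (Finset.mem_univ r)]
    apply add_le_add
    · simp [infl]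
    · refine le_trans (le_of_eq ?_) (Finset.sum_le_sum_of_subset_of_nonneg
        (Finset.subset_univ (Finset.univ.erase r)) fun _ _ _ => abs_nonneg _)
      apply Finset.sum_congr rfl
      intro u hu
      rw [infl, if_neg (Finset.ne_of_mem_erase hu)]

/-- Potential-weighted influence bound at a vertex with at most `Δ - 1` neighbours. -/
lemma tinfl_weighted (G : SimpleGraph V) {lam : V → ℝ} (hl : ∀ v, 0 < lam v) {m : ℕ} (hm : 1 ≤ m)
    (hdeg : ∀ v, (nbrs G Finset.univ v).card ≤ m + 2)
    {δ : ℝ} (hδ0 : 0 < δ) (hδ1 : δ < 1) (hle : ∀ v, lam v ≤ (1 - δ) * hcCrit (m + 2)) :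
    ∀ n : ℕ, ∀ U : Finset V, U.card ≤ n → ∀ r ∈ U, (nbrs G U r).card ≤ m + 1 →
      √(occ G lam U r) * tinfl G lam U r ≤ √(hcCrit (m + 2)) * (18 / δ) := by
  have hl' : ∀ v, 0 ≤ lam v := fun v => (hl v).le
  intro n
  induction n with
  | zero =>
    intro U hU r hr
    rw [Finset.card_eq_zero.1 (Nat.le_zero.1 hU)] at hr
    simp at hr
  | succ n ih =>
    intro U hU r hr hnb
    obtain ⟨p, S, h1, h2, h3⟩ := tinfl_rec G hl hr
    set A := nbrs G (U.erase r) r with hA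
    set M := √(hcCrit (m + 2)) * (18 / δ) with hM
    have hAcard : A.card ≤ m + 1 :=
      le_trans (Finset.card_le_card (Finset.filter_subset_filter _ (Finset.erase_subset _ _))) hnb
    have hp0 : ∀ a ∈ A, 0 ≤ p a := by
      intro a ha
      obtain ⟨U', _, _, h, _⟩ := h1 a ha
      rw [h]
      exact occ_nonneg G hl' _ _
    have hp1 : ∀ a ∈ A, p a < 1 := by
      intro a ha
      obtain ⟨U', _, _, h, _⟩ := h1 a ha
      rw [h]
      exact occ_lt_one G hl' _ _
    have hrec : ∀ a ∈ A, p a * S a ≤ √(p a) * M := by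
      intro a ha
      obtain ⟨U', hU', haU', hpa, hSa⟩ := h1 a ha
      have hcard : U'.card ≤ n := by
        have h := Finset.card_le_card hU'
        rw [Finset.card_erase_of_mem hr] at h
        omega
      have hnb' := nbrs_card_le G (hdeg a) (Finset.mem_filter.1 ha).2 hU'
      have h := ih U' hcard a haU' hnb'
      rw [← hpa, ← hSa] at h
      calc p a * S a = √(p a) * (√(p a) * S a) := by
            rw [← mul_assoc, Real.mul_self_sqrt (hp0 a ha)]
        _ ≤ _ := mul_le_mul_of_nonneg_left h (Real.sqrt_nonneg _)
    have hcon := tree_contraction A p hm hAcard hp0 hp1 hδ0 hδ1 (hl r) (hle r)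
    rw [← h2] at hcon
    have hq0 := occ_nonneg G hl' U r
    set q := occ G lam U r with hq
    have hsum0 : 0 ≤ ∑ a ∈ A, √(p a) := Finset.sum_nonneg fun _ _ => Real.sqrt_nonneg _
    have hgam : √q * ∑ a ∈ A, √(p a) ≤ 1 - δ / 18 := by
      apply abs_le_of_sq_le_sq' _ (by linarith) |>.2
      rw [mul_pow, Real.sq_sqrt hq0]
      nlinarith
    have hqle : √q ≤ √(hcCrit (m + 2)) := by
      apply Real.sqrt_le_sqrt
      have := occ_le_lam G hl' U r
      have := hle r
      nlinarith [hcCrit_pos hm]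
    have hM0 : 0 ≤ M := by positivity
    calc √q * tinfl G lam U r ≤ √q * (1 + ∑ a ∈ A, √(p a) * M) := by
          apply mul_le_mul_of_nonneg_left _ (Real.sqrt_nonneg _)
          exact h3.trans (add_le_add le_rfl (Finset.sum_le_sum hrec))
      _ = √q + (√q * ∑ a ∈ A, √(p a)) * M := by
          rw [← Finset.sum_mul]
          ring
      _ ≤ √(hcCrit (m + 2)) + (1 - δ / 18) * M :=
          add_le_add hqle (mul_le_mul_of_nonneg_right hgam hM0)
      _ = M := by
          rw [hM]
          field_simp
          ring

/-- Bound on the total influence of any vertex, uniform in the graph and its maximum degree. -/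
lemma tinfl_le (G : SimpleGraph V) {lam : V → ℝ} (hl : ∀ v, 0 < lam v) {m : ℕ} (hm : 1 ≤ m)
    (hdeg : ∀ v, (nbrs G Finset.univ v).card ≤ m + 2)
    {δ : ℝ} (hδ0 : 0 < δ) (hδ1 : δ < 1) (hle : ∀ v, lam v ≤ (1 - δ) * hcCrit (m + 2))
    (U : Finset V) (r : V) (hr : r ∈ U) :
    tinfl G lam U r ≤ 1 + 576 / δ := by
  have hl' : ∀ v, 0 ≤ lam v := fun v => (hl v).le
  obtain ⟨p, S, h1, h2, h3⟩ := tinfl_rec G hl hr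
  set A := nbrs G (U.erase r) r with hA
  have hAcard : (A.card : ℝ) ≤ m + 2 := by
    have : A.card ≤ m + 2 := le_trans (Finset.card_le_card
      (Finset.filter_subset_filter _ (Finset.subset_univ _))) (hdeg r)
    exact_mod_cast this
  have hterm : ∀ a ∈ A, p a * S a ≤ hcCrit (m + 2) * (18 / δ) := by
    intro a ha
    obtain ⟨U', hU', haU', hpa, hSa⟩ := h1 a ha
    have hnb' := nbrs_card_le G (hdeg a) (Finset.mem_filter.1 ha).2 hU'
    have h := tinfl_weighted G hl hm hdeg hδ0 hδ1 hle U'.card U' le_rfl a haU' hnb'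
    rw [← hpa, ← hSa] at h
    have hp0 : 0 ≤ p a := by rw [hpa]; exact occ_nonneg G hl' _ _
    have hple : √(p a) ≤ √(hcCrit (m + 2)) := by
      apply Real.sqrt_le_sqrt
      have := occ_le_lam G hl' U' a
      have := hle a
      nlinarith [hcCrit_pos hm]
    calc p a * S a = √(p a) * (√(p a) * S a) := by
          rw [← mul_assoc, Real.mul_self_sqrt hp0]
      _ ≤ √(p a) * (√(hcCrit (m + 2)) * (18 / δ)) :=
          mul_le_mul_of_nonneg_left h (Real.sqrt_nonneg _)
      _ ≤ √(hcCrit (m + 2)) * (√(hcCrit (m + 2)) * (18 / δ)) :=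
          mul_le_mul_of_nonneg_right hple (by positivity)
      _ = _ := by rw [← mul_assoc, Real.mul_self_sqrt (hcCrit_pos hm).le]
  have hsum : ∑ a ∈ A, p a * S a ≤ A.card * (hcCrit (m + 2) * (18 / δ)) := by
    have := Finset.sum_le_card_nsmul A _ _ hterm
    rwa [nsmul_eq_mul] at this
  have hcp := hcCrit_pos hm
  have h32 := hcCrit_mul_le' hm
  have h4 : A.card * (hcCrit (m + 2) * (18 / δ)) ≤ 576 / δ := by
    calc A.card * (hcCrit (m + 2) * (18 / δ)) ≤ (m + 2) * (hcCrit (m + 2) * (18 / δ)) :=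
          mul_le_mul_of_nonneg_right hAcard (by positivity)
      _ = (hcCrit (m + 2) * (m + 2)) * (18 / δ) := by ring
      _ ≤ 32 * (18 / δ) := mul_le_mul_of_nonneg_right (by nlinarith) (by positivity)
      _ = _ := by ring
  linarith

/-- Spectral independence: the variance of the linear statistic `∑ i ∈ σ, w i` is at most a constant
that depends on `δ` only times `∑ i, occ i * w i ^ 2`. -/
lemma variance_le (G : SimpleGraph V) {lam : V → ℝ} (hl : ∀ v, 0 < lam v) {m : ℕ} (hm : 1 ≤ m)
    (hdeg : ∀ v, (nbrs G Finset.univ v).card ≤ m + 2)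
    {δ : ℝ} (hδ0 : 0 < δ) (hδ1 : δ < 1) (hle : ∀ v, lam v ≤ (1 - δ) * hcCrit (m + 2))
    (U : Finset V) (w : V → ℝ) :
    wsum G lam U (fun σ => (∑ i ∈ σ, w i) ^ 2) / zsum G lam U
        - (wsum G lam U (fun σ => ∑ i ∈ σ, w i) / zsum G lam U) ^ 2
      ≤ (1 + 576 / δ) * ∑ i ∈ U, occ G lam U i * w i ^ 2 := by
  have hl' : ∀ v, 0 ≤ lam v := fun v => (hl v).le
  have hsumind : ∀ σ ∈ U.powerset, ∑ i ∈ σ, w i = ∑ i ∈ U, w i * (if i ∈ σ then 1 else 0) := by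
    intro σ hσ
    simp only [mul_ite, mul_one, mul_zero]
    rw [Finset.sum_ite_mem, Finset.inter_eq_right.2 (Finset.mem_powerset.1 hσ)]
  set c : V → V → ℝ := fun r u =>
    wsum G lam U (fun σ => (if r ∈ σ then 1 else 0) * (if u ∈ σ then 1 else 0)) / zsum G lam U
        - occ G lam U r * occ G lam U u with hc
  have hmean : wsum G lam U (fun σ => ∑ i ∈ σ, w i) / zsum G lam U =
      ∑ i ∈ U, w i * occ G lam U i := by
    have : wsum G lam U (fun σ => ∑ i ∈ σ, w i) =
        ∑ i ∈ U, w i * wsum G lam U (fun σ => if i ∈ σ then 1 else 0) := by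
      unfold wsum
      simp_rw [Finset.mul_sum]
      rw [Finset.sum_comm]
      apply Finset.sum_congr rfl
      intro σ hσ
      rw [← Finset.mul_sum, hsumind σ hσ, Finset.mul_sum]
      apply Finset.sum_congr rfl
      intro i _
      ring
    rw [this, Finset.sum_div]
    apply Finset.sum_congr rfl
    intro i _
    rw [mul_div_assoc]
    rfl
  have hsq : wsum G lam U (fun σ => (∑ i ∈ σ, w i) ^ 2) / zsum G lam U =
      ∑ r ∈ U, ∑ u ∈ U, w r * w u *
        (wsum G lam U (fun σ => (if r ∈ σ then 1 else 0) * (if u ∈ σ then 1 else 0))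
          / zsum G lam U) := by
    have : wsum G lam U (fun σ => (∑ i ∈ σ, w i) ^ 2) =
        ∑ r ∈ U, ∑ u ∈ U, w r * w u *
        wsum G lam U (fun σ => (if r ∈ σ then 1 else 0) * (if u ∈ σ then 1 else 0)) := by
      have h1 : wsum G lam U (fun σ => (∑ i ∈ σ, w i) ^ 2) = ∑ σ ∈ U.powerset, ∑ r ∈ U, ∑ u ∈ U,
          w r * w u * (hcWeight G lam σ * ((if r ∈ σ then 1 else 0) * (if u ∈ σ then 1 else 0))) := by
        unfold wsum
        apply Finset.sum_congr rfl
        intro σ hσ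
        beta_reduce
        rw [hsumind σ hσ, sq, Finset.sum_mul_sum, Finset.mul_sum]
        apply Finset.sum_congr rfl
        intro r _
        rw [Finset.mul_sum]
        apply Finset.sum_congr rfl
        intro u _
        ring
      rw [h1, Finset.sum_comm]
      apply Finset.sum_congr rfl
      intro r _
      rw [Finset.sum_comm]
      apply Finset.sum_congr rfl
      intro u _
      rw [wsum, Finset.mul_sum]
    rw [this, Finset.sum_div]
    apply Finset.sum_congr rfl
    intro r _
    rw [Finset.sum_div]
    apply Finset.sum_congr rfl
    intro u _
    rw [mul_div_assoc]
  have hvar : wsum G lam U (fun σ => (∑ i ∈ σ, w i) ^ 2) / zsum G lam U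
        - (wsum G lam U (fun σ => ∑ i ∈ σ, w i) / zsum G lam U) ^ 2 =
      ∑ r ∈ U, ∑ u ∈ U, w r * w u * c r u := by
    rw [hmean, hsq, sq, Finset.sum_mul_sum, ← Finset.sum_sub_distrib]
    apply Finset.sum_congr rfl
    intro r _
    rw [← Finset.sum_sub_distrib]
    apply Finset.sum_congr rfl
    intro u _
    rw [hc]
    ring
  have hcsymm : ∀ r u, c r u = c u r := by
    intro r u
    simp only [hc]
    rw [mul_comm (occ G lam U r)]
    congr 3
    funext σ
    rw [mul_comm]
  have hrow : ∀ r ∈ U, ∑ u ∈ U, |c r u| ≤ (1 + 576 / δ) * occ G lam U r := by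
    intro r hr
    have ho0 := occ_nonneg G hl' U r
    have ho1 := occ_lt_one G hl' U r
    have h1 : ∑ u ∈ U, |c r u| ≤ ∑ u, occ G lam U r * |infl G lam U r u| := by
      refine le_trans (Finset.sum_le_sum_of_subset_of_nonneg (Finset.subset_univ U)
        fun _ _ _ => abs_nonneg _) ?_
      apply Finset.sum_le_sum
      intro u _
      simp only [hc]
      rw [cov_eq_infl G hl' hr u, abs_mul, abs_of_nonneg (mul_nonneg ho0 (by linarith))]
      apply mul_le_mul_of_nonneg_right _ (abs_nonneg _)
      nlinarith
    rw [← Finset.mul_sum] at h1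
    have h2 := tinfl_le G hl hm hdeg hδ0 hδ1 hle U r hr
    calc _ ≤ _ := h1
      _ ≤ occ G lam U r * (1 + 576 / δ) := mul_le_mul_of_nonneg_left h2 ho0
      _ = _ := mul_comm _ _
  rw [hvar]
  calc ∑ r ∈ U, ∑ u ∈ U, w r * w u * c r u
      ≤ ∑ r ∈ U, ∑ u ∈ U, (w r ^ 2 * |c r u| / 2 + w u ^ 2 * |c u r| / 2) := by
        apply Finset.sum_le_sum
        intro r _
        apply Finset.sum_le_sum
        intro u _
        rw [hcsymm u r]
        have h1 : w r * w u * c r u ≤ |w r * w u| * |c r u| := by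
          rw [← abs_mul]
          exact le_abs_self _
        have h2 : |w r * w u| ≤ (w r ^ 2 + w u ^ 2) / 2 := by
          rw [abs_le]
          constructor <;> nlinarith [sq_nonneg (w r + w u), sq_nonneg (w r - w u)]
        nlinarith [abs_nonneg (c r u)]
    _ = ∑ r ∈ U, w r ^ 2 * ∑ u ∈ U, |c r u| := by
        simp_rw [Finset.sum_add_distrib]
        rw [Finset.sum_comm (f := fun r u => w u ^ 2 * |c u r| / 2), ← Finset.sum_add_distrib]
        apply Finset.sum_congr rfl
        intro r _
        rw [← Finset.sum_add_distrib, Finset.mul_sum]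
        apply Finset.sum_congr rfl
        intro u _
        ring
    _ ≤ ∑ r ∈ U, w r ^ 2 * ((1 + 576 / δ) * occ G lam U r) :=
        Finset.sum_le_sum fun r hr => mul_le_mul_of_nonneg_left (hrow r hr) (sq_nonneg _)
    _ = _ := by
        rw [Finset.mul_sum]
        apply Finset.sum_congr rfl
        intro r _
        ring

/-! ### The generating-function inequality -/

/-- Raising the fugacities from `lam'` to `lam''` multiplies the partition function by at most
`exp ∑ (lam'' - lam')⁺`, because `∂ log Z / ∂ λ_i ≤ 1`. -/
lemma zsum_le_mul_exp (G : SimpleGraph V) {lam' lam'' : V → ℝ} (hl' : ∀ v, 0 ≤ lam' v)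
    (hl'' : ∀ v, 0 ≤ lam'' v) (U : Finset V) :
    zsum G lam'' U ≤ zsum G lam' U * Real.exp (∑ i ∈ U, max 0 (lam'' i - lam' i)) := by
  induction U using Finset.strongInduction with
  | H U ih =>
    rcases U.eq_empty_or_nonempty with rfl | ⟨r, hr⟩
    · simp [zsum, wsum, hcWeight_empty]
    · set E := Real.exp (∑ i ∈ U.erase r, max 0 (lam'' i - lam' i)) with hE
      set mr := max 0 (lam'' r - lam' r) with hmr
      have hE0 : 0 < E := Real.exp_pos _
      have h1 := ih (U.erase r) (Finset.erase_ssubset hr)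
      have h2 := ih (del G U r)
        (lt_of_le_of_lt (del_subset_erase G U r) (Finset.erase_ssubset hr))
      have h3 : Real.exp (∑ i ∈ del G U r, max 0 (lam'' i - lam' i)) ≤ E := by
        apply Real.exp_le_exp.2
        exact Finset.sum_le_sum_of_subset_of_nonneg (del_subset_erase G U r)
          fun _ _ _ => le_max_left _ _
      have hz := zsum_pos G hl' (del G U r)
      have h2' : zsum G lam'' (del G U r) ≤ zsum G lam' (del G U r) * E :=
        h2.trans (mul_le_mul_of_nonneg_left h3 hz.le)
      have hlr : lam'' r ≤ lam' r + mr := by linarith [le_max_right 0 (lam'' r - lam' r)]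
      have hmr0 : 0 ≤ mr := le_max_left _ _
      have hzU : zsum G lam' (del G U r) ≤ zsum G lam' U :=
        zsum_mono G hl' ((del_subset_erase G U r).trans (Finset.erase_subset _ _))
      have hexp : mr + 1 ≤ Real.exp mr := Real.add_one_le_exp mr
      have hzU0 := zsum_pos G hl' U
      calc zsum G lam'' U = zsum G lam'' (U.erase r) + lam'' r * zsum G lam'' (del G U r) :=
            zsum_rec G lam'' hr
        _ ≤ zsum G lam' (U.erase r) * E + (lam' r + mr) * (zsum G lam' (del G U r) * E) :=
            add_le_add h1 (mul_le_mul hlr h2' (zsum_pos G hl'' _).le (by linarith [hl' r]))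
        _ = (zsum G lam' U + mr * zsum G lam' (del G U r)) * E := by
            rw [zsum_rec G lam' hr]
            ring
        _ ≤ (zsum G lam' U * Real.exp mr) * E := by
            apply mul_le_mul_of_nonneg_right _ hE0.le
            nlinarith
        _ = _ := by
            rw [← Finset.add_sum_erase U _ hr, Real.exp_add, mul_assoc]

lemma zsum_le_sdiff (G : SimpleGraph V) {lam : V → ℝ} (hl : ∀ v, 0 ≤ lam v) (U A : Finset V)
    (hA : A ⊆ U) :
    zsum G lam U ≤ zsum G lam (U \ A) * Real.exp (∑ i ∈ A, lam i) := by
  induction A using Finset.induction_on with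
  | empty => simp
  | insert a A ha ih =>
    have h1 := ih ((Finset.subset_insert a A).trans hA)
    have haU : a ∈ U \ A := Finset.mem_sdiff.2 ⟨hA (Finset.mem_insert_self a A), ha⟩
    have hset : U \ insert a A = (U \ A).erase a := by
      ext x
      simp only [Finset.mem_sdiff, Finset.mem_insert, Finset.mem_erase]
      tauto
    rw [hset, Finset.sum_insert ha, Real.exp_add, ← mul_assoc]
    refine h1.trans (mul_le_mul_of_nonneg_right ?_ (Real.exp_pos _).le)
    rw [zsum_rec G lam haU]
    have h2 := zsum_mono G hl (del_subset_erase G (U \ A) a)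
    have h3 := zsum_pos G hl ((U \ A).erase a)
    have h4 := Real.add_one_le_exp (lam a)
    nlinarith [hl a]

/-- Occupation probabilities are comparable to the fugacities. -/
lemma lam_le_occ (G : SimpleGraph V) {lam : V → ℝ} (hl : ∀ v, 0 ≤ lam v) {m : ℕ} (hm : 1 ≤ m)
    (hdeg : ∀ v, (nbrs G Finset.univ v).card ≤ m + 2)
    (hle : ∀ v, lam v ≤ hcCrit (m + 2)) {U : Finset V} {r : V} (hr : r ∈ U) :
    lam r ≤ Real.exp 32 * occ G lam U r := by
  have hsub : insert r (nbrs G U r) ⊆ U :=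
    Finset.insert_subset hr (Finset.filter_subset _ _)
  have h1 := zsum_le_sdiff G hl U _ hsub
  have hset : U \ insert r (nbrs G U r) = del G U r := by
    ext x
    simp only [nbrs, del, Finset.mem_sdiff, Finset.mem_insert, Finset.mem_filter]
    tauto
  rw [hset] at h1
  have hcard : ((insert r (nbrs G U r)).card : ℝ) ≤ m + 3 := by
    have h2 : (nbrs G U r).card ≤ m + 2 := le_trans (Finset.card_le_card
      (Finset.filter_subset_filter _ (Finset.subset_univ _))) (hdeg r)
    have h3 := Finset.card_insert_le r (nbrs G U r)
    have : (insert r (nbrs G U r)).card ≤ m + 3 := by omega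
    exact_mod_cast this
  have hsum : ∑ i ∈ insert r (nbrs G U r), lam i ≤ 32 := by
    have h2 := Finset.sum_le_card_nsmul (insert r (nbrs G U r)) lam _ fun i _ => hle i
    rw [nsmul_eq_mul] at h2
    have h3 := hcCrit_mul_le' hm
    have h4 := hcCrit_pos hm
    nlinarith
  have hz := zsum_pos G hl U
  have hd := zsum_pos G hl (del G U r)
  rw [occ_self G lam hr, mul_div_assoc', le_div_iff₀ hz]
  have h5 : zsum G lam U ≤ zsum G lam (del G U r) * Real.exp 32 :=
    h1.trans (mul_le_mul_of_nonneg_left (Real.exp_le_exp.2 hsum) hd.le)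
  nlinarith [mul_le_mul_of_nonneg_left h5 (hl r)]

/-- Second-order bound on a log-Laplace transform from a variance bound along the way. -/
lemma log_laplace_le {ι : Type*} (I : Finset ι) (a x : ι → ℝ) (B : ℝ)
    (hpos : ∀ t : ℝ, 0 < ∑ i ∈ I, a i * Real.exp (t * x i))
    (hB : ∀ t ∈ Set.Icc (0 : ℝ) 1,
      (∑ i ∈ I, a i * (x i ^ 2 * Real.exp (t * x i))) / (∑ i ∈ I, a i * Real.exp (t * x i)) -
      ((∑ i ∈ I, a i * (x i * Real.exp (t * x i))) / (∑ i ∈ I, a i * Real.exp (t * x i))) ^ 2 ≤ B) :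
    Real.log (∑ i ∈ I, a i * Real.exp (x i)) ≤
      Real.log (∑ i ∈ I, a i) + (∑ i ∈ I, a i * x i) / (∑ i ∈ I, a i) + B / 2 := by
  set Z : ℝ → ℝ := fun t => ∑ i ∈ I, a i * Real.exp (t * x i) with hZ
  set M : ℝ → ℝ := fun t => ∑ i ∈ I, a i * (x i * Real.exp (t * x i)) with hM
  have hexp : ∀ (i : ι) (t : ℝ),
      HasDerivAt (fun t => Real.exp (t * x i)) (x i * Real.exp (t * x i)) t := by
    intro i t
    have h := ((hasDerivAt_id t).mul_const (x i)).exp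
    simp only [id, one_mul] at h
    rwa [mul_comm] at h
  have hZd : ∀ t, HasDerivAt Z (M t) t := by
    intro t
    exact HasDerivAt.fun_sum fun i _ => (hexp i t).const_mul (a i)
  have hMd : ∀ t, HasDerivAt M (∑ i ∈ I, a i * (x i ^ 2 * Real.exp (t * x i))) t := by
    intro t
    apply HasDerivAt.fun_sum
    intro i _
    have h := ((hexp i t).const_mul (x i)).const_mul (a i)
    rwa [← mul_assoc (x i), ← sq] at h
  have hφd : ∀ t, HasDerivAt (fun t => B * t - M t / Z t)
      (B - ((∑ i ∈ I, a i * (x i ^ 2 * Real.exp (t * x i))) / Z t - (M t / Z t) ^ 2)) t := by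
    intro t
    have h1 := ((hasDerivAt_id t).const_mul B).sub ((hMd t).div (hZd t) (hpos t).ne')
    have hz := (hpos t).ne'
    change Z t ≠ 0 at hz
    have e : ((∑ i ∈ I, a i * (x i ^ 2 * Real.exp (t * x i))) * Z t - M t * M t) / Z t ^ 2 =
        (∑ i ∈ I, a i * (x i ^ 2 * Real.exp (t * x i))) / Z t - (M t / Z t) ^ 2 := by
      rw [sub_div, div_pow, sq (Z t), mul_div_mul_right _ _ hz, ← sq (M t)]
    rw [mul_one, e] at h1
    exact h1
  have hmono : MonotoneOn (fun t => B * t - M t / Z t) (Set.Icc 0 1) := by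
    apply monotoneOn_of_deriv_nonneg (convex_Icc 0 1)
    · exact fun t _ => (hφd t).continuousAt.continuousWithinAt
    · exact fun t _ => (hφd t).differentiableAt.differentiableWithinAt
    · intro t ht
      rw [(hφd t).deriv]
      have := hB t (interior_subset ht)
      linarith
  have hψd : ∀ t, HasDerivAt (fun t => B / 2 * t ^ 2 + t * (M 0 / Z 0) - Real.log (Z t))
      (B * t + M 0 / Z 0 - M t / Z t) t := by
    intro t
    have h1 := ((((hasDerivAt_id t).pow 2).const_mul (B / 2)).add
      ((hasDerivAt_id t).mul_const (M 0 / Z 0))).sub ((hZd t).log (hpos t).ne')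
    have e : B / 2 * (((2 : ℕ) : ℝ) * id t ^ (2 - 1) * 1) + 1 * (M 0 / Z 0) - M t / Z t =
        B * t + M 0 / Z 0 - M t / Z t := by
      simp only [id]
      norm_num
      ring
    rw [e] at h1
    exact h1
  have hmono2 : MonotoneOn (fun t => B / 2 * t ^ 2 + t * (M 0 / Z 0) - Real.log (Z t))
      (Set.Icc 0 1) := by
    apply monotoneOn_of_deriv_nonneg (convex_Icc 0 1)
    · exact fun t _ => (hψd t).continuousAt.continuousWithinAt
    · exact fun t _ => (hψd t).differentiableAt.differentiableWithinAt
    · intro t ht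
      rw [(hψd t).deriv]
      have ht' := interior_subset ht
      have := hmono (Set.left_mem_Icc.2 zero_le_one) ht' ht'.1
      simp only [mul_zero, zero_sub] at this
      linarith
  have h := hmono2 (Set.left_mem_Icc.2 zero_le_one) (Set.right_mem_Icc.2 zero_le_one) zero_le_one
  simp only [hZ, hM, zero_mul, one_mul, Real.exp_zero, mul_one, one_pow] at h
  norm_num at h
  linarith

lemma hcWeight_mul (G : SimpleGraph V) (lam y : V → ℝ) (σ : Finset V) :
    hcWeight G (fun v => lam v * y v) σ = hcWeight G lam σ * ∏ v ∈ σ, y v := by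
  unfold hcWeight
  split_ifs
  · exact Finset.prod_mul_distrib
  · rw [zero_mul]

lemma hcWeight_exp (G : SimpleGraph V) (lam w : V → ℝ) (t : ℝ) (σ : Finset V) :
    hcWeight G (fun v => lam v * Real.exp (t * w v)) σ =
      hcWeight G lam σ * Real.exp (t * ∑ v ∈ σ, w v) := by
  rw [hcWeight_mul, Finset.mul_sum, Real.exp_sum]

/-- Quadratic upper bound on `log Z` near a subcritical fugacity vector. -/
lemma log_zsum_quadratic (G : SimpleGraph V) {lam : V → ℝ} (hl : ∀ v, 0 < lam v) {m : ℕ}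
    (hm : 1 ≤ m) (hdeg : ∀ v, (nbrs G Finset.univ v).card ≤ m + 2)
    {δ : ℝ} (hδ0 : 0 < δ) (hδ1 : δ < 1) (hle : ∀ v, lam v ≤ (1 - δ) * hcCrit (m + 2))
    (U : Finset V) (w : V → ℝ) (hw : ∀ v, |w v| ≤ δ / 4) :
    Real.log (zsum G (fun v => lam v * Real.exp (w v)) U) ≤ Real.log (zsum G lam U) +
      ∑ i ∈ U, occ G lam U i * (w i + (1 + 1152 / δ) * Real.exp 33 / 2 * w i ^ 2) := by
  have hl' : ∀ v, 0 ≤ lam v := fun v => (hl v).le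
  have hc := hcCrit_pos hm
  have hlc : ∀ v, lam v ≤ hcCrit (m + 2) := fun v => by nlinarith [hle v]
  set B := ∑ i ∈ U, occ G lam U i * ((1 + 1152 / δ) * Real.exp 33 * w i ^ 2) with hBdef
  have key := log_laplace_le U.powerset (hcWeight G lam) (fun σ => ∑ v ∈ σ, w v) B ?_ ?_
  · have e1 : ∑ σ ∈ U.powerset, hcWeight G lam σ * Real.exp (∑ v ∈ σ, w v) =
        zsum G (fun v => lam v * Real.exp (w v)) U := by
      unfold zsum wsum
      apply Finset.sum_congr rfl
      intro σ _
      have := hcWeight_exp G lam w 1 σ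
      simp only [one_mul] at this
      rw [this, mul_one]
    have e2 : ∑ σ ∈ U.powerset, hcWeight G lam σ = zsum G lam U := by
      simp [zsum, wsum]
    have e3 : (∑ σ ∈ U.powerset, hcWeight G lam σ * ∑ v ∈ σ, w v) / zsum G lam U =
        ∑ i ∈ U, occ G lam U i * w i := by
      have h1 : ∑ σ ∈ U.powerset, hcWeight G lam σ * ∑ v ∈ σ, w v =
          ∑ i ∈ U, wsum G lam U (fun σ => if i ∈ σ then 1 else 0) * w i := by
        unfold wsum
        simp_rw [Finset.sum_mul]
        rw [Finset.sum_comm]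
        apply Finset.sum_congr rfl
        intro σ hσ
        have : ∑ v ∈ σ, w v = ∑ i ∈ U, (if i ∈ σ then 1 else 0) * w i := by
          simp only [ite_mul, one_mul, zero_mul]
          rw [Finset.sum_ite_mem, Finset.inter_eq_right.2 (Finset.mem_powerset.1 hσ)]
        rw [this, Finset.mul_sum]
        apply Finset.sum_congr rfl
        intro i _
        ring
      rw [h1, Finset.sum_div]
      apply Finset.sum_congr rfl
      intro i _
      rw [occ]
      ring
    rw [e1, e2, e3] at key
    refine key.trans (le_of_eq ?_)
    rw [add_assoc, hBdef, Finset.sum_div, ← Finset.sum_add_distrib]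
    congr 1
    apply Finset.sum_congr rfl
    intro i _
    ring
  · intro t
    have h := zsum_pos G (lam := fun v => lam v * Real.exp (t * w v))
      (fun v => mul_nonneg (hl' v) (Real.exp_pos _).le) U
    unfold zsum wsum at h
    simpa only [hcWeight_exp, mul_one] using h
  · intro t ht
    -- the tilted fugacities are still below the threshold, with `δ / 2` in place of `δ`
    have hexp_le : ∀ v, Real.exp (t * w v) ≤ 1 + δ / 2 := by
      intro v
      have h1 : t * w v ≤ δ / 4 := by
        have h2 := abs_le.1 (hw v)
        have := mul_le_mul_of_nonneg_left h2.2 ht.1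
        nlinarith [ht.2]
      have h3 : Real.exp (t * w v) ≤ Real.exp (δ / 4) := Real.exp_le_exp.2 h1
      have h4 : Real.exp (δ / 4) ≤ 1 + δ / 2 := by
        have h5 := Real.add_one_le_exp (-(δ / 4))
        have h6 : Real.exp (δ / 4) * Real.exp (-(δ / 4)) = 1 := by
          rw [← Real.exp_add]
          simp
        nlinarith [Real.exp_pos (δ / 4)]
      linarith
    have hlt : ∀ v, lam v * Real.exp (t * w v) ≤ (1 - δ / 2) * hcCrit (m + 2) := by
      intro v
      calc lam v * Real.exp (t * w v) ≤ ((1 - δ) * hcCrit (m + 2)) * (1 + δ / 2) :=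
            mul_le_mul (hle v) (hexp_le v) (Real.exp_pos _).le (by nlinarith)
        _ = ((1 - δ) * (1 + δ / 2)) * hcCrit (m + 2) := by ring
        _ ≤ _ := mul_le_mul_of_nonneg_right (by nlinarith) hc.le
    have hlpos : ∀ v, 0 < lam v * Real.exp (t * w v) := fun v =>
      mul_pos (hl v) (Real.exp_pos _)
    have hv := variance_le G hlpos hm hdeg (by linarith : 0 < δ / 2) (by linarith) hlt U w
    have e0 : ∀ f : Finset V → ℝ, wsum G (fun v => lam v * Real.exp (t * w v)) U f =
        ∑ σ ∈ U.powerset, hcWeight G lam σ * (f σ * Real.exp (t * ∑ v ∈ σ, w v)) := by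
      intro f
      unfold wsum
      apply Finset.sum_congr rfl
      intro σ _
      rw [hcWeight_exp]
      ring
    have e1 : zsum G (fun v => lam v * Real.exp (t * w v)) U =
        ∑ σ ∈ U.powerset, hcWeight G lam σ * Real.exp (t * ∑ v ∈ σ, w v) := by
      unfold zsum
      rw [e0]
      simp
    rw [e0, e0, e1] at hv
    refine hv.trans ?_
    rw [hBdef, Finset.mul_sum]
    apply Finset.sum_le_sum
    intro i hi
    have h1 := occ_le_lam G (fun v => (hlpos v).le) U i
    have h2 := lam_le_occ G hl' hm hdeg hlc hi
    have h3 : Real.exp (t * w i) ≤ Real.exp 1 := by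
      have h4 := hexp_le i
      have h5 := Real.add_one_le_exp 1
      linarith
    have h6 : occ G (fun v => lam v * Real.exp (t * w v)) U i ≤
        occ G lam U i * Real.exp 33 := by
      calc _ ≤ lam i * Real.exp (t * w i) := h1
        _ ≤ (Real.exp 32 * occ G lam U i) * Real.exp 1 :=
            mul_le_mul h2 h3 (Real.exp_pos _).le
              (mul_nonneg (Real.exp_pos _).le (occ_nonneg G hl' U i))
        _ = occ G lam U i * (Real.exp 32 * Real.exp 1) := by ring
        _ = _ := by
            rw [← Real.exp_add]
            norm_num
    have h7 : 576 / (δ / 2) = 1152 / δ := by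
      field_simp
      norm_num
    rw [h7]
    have h8 : (0 : ℝ) ≤ 1 + 1152 / δ := by positivity
    calc (1 + 1152 / δ) * (occ G (fun v => lam v * Real.exp (t * w v)) U i * w i ^ 2)
        ≤ (1 + 1152 / δ) * ((occ G lam U i * Real.exp 33) * w i ^ 2) :=
          mul_le_mul_of_nonneg_left (mul_le_mul_of_nonneg_right h6 (sq_nonneg _)) h8
      _ = _ := by ring

/-- Scalar comparison: clipping `log x` to `[-1/Q, 1/Q]` and paying a linear price `exp 32` for the
excess of `x` over the clipped value is dominated by `(x ^ C - 1) / C` once `C` is large. -/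
lemma scalar_clip {Q : ℝ} (hQ : 1 ≤ Q) {C : ℕ} (hC : 1 + 32 * Q ≤ C) {x : ℝ} (hx : 0 ≤ x) :
    ∃ w : ℝ, |w| ≤ 1 / Q ∧
      w + Q / 2 * w ^ 2 + Real.exp 32 * max 0 (x - Real.exp w) ≤ (x ^ C - 1) / C := by
  have hQ0 : 0 < Q := by linarith
  have hC0 : (0 : ℝ) < C := by linarith
  set e := 1 / Q with he
  have he0 : 0 < e := by positivity
  have hQe : Q * e = 1 := by
    rw [he]
    field_simp
  have hCe : 32 ≤ (C - 1) * e := by nlinarith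
  have hxC : 0 ≤ x ^ C := pow_nonneg hx C
  have hlow : -1 / (C : ℝ) ≤ (x ^ C - 1) / C := by
    apply div_le_div_of_nonneg_right _ hC0.le
    linarith
  -- `exp (C w) ≥ (1 + C w / 2) ^ 2` leaves room for the quadratic term because `C ≥ 2 Q`
  have hquad : ∀ w : ℝ, -2 ≤ C * w → w + Q / 2 * w ^ 2 ≤ (Real.exp w ^ C - 1) / C := by
    intro w hw
    rw [le_div_iff₀ hC0, ← Real.exp_nat_mul]
    have h1 := Real.add_one_le_exp (C * w / 2)
    have h2 : Real.exp (C * w) = Real.exp (C * w / 2) ^ 2 := by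
      rw [← Real.exp_nat_mul]
      congr 1
      push_cast
      ring
    have h3 : (C * w / 2 + 1) ^ 2 ≤ Real.exp (C * w / 2) ^ 2 :=
      pow_le_pow_left₀ (by linarith) h1 2
    rw [h2]
    have h4 : Q / 2 * w ^ 2 * C ≤ C / 4 * w ^ 2 * C := by
      apply mul_le_mul_of_nonneg_right _ hC0.le
      apply mul_le_mul_of_nonneg_right _ (sq_nonneg _)
      linarith
    nlinarith
  by_cases h1 : x ≤ Real.exp (-e)
  · refine ⟨-e, by rw [abs_neg, abs_of_pos he0], ?_⟩
    rw [max_eq_left (by linarith), mul_zero, add_zero]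
    refine le_trans ?_ hlow
    rw [le_div_iff₀ hC0]
    nlinarith
  push Not at h1
  have hx0 : 0 < x := lt_trans (Real.exp_pos _) h1
  by_cases h2 : x ≤ Real.exp e
  · have hw : |Real.log x| ≤ e := by
      rw [abs_le]
      constructor
      · rw [Real.le_log_iff_exp_le hx0]
        exact h1.le
      · rwa [Real.log_le_iff_le_exp hx0]
    refine ⟨Real.log x, hw, ?_⟩
    have hq := hquad (Real.log x)
    rw [Real.exp_log hx0] at hq ⊢
    rw [sub_self, max_self, mul_zero, add_zero]
    by_cases h3 : -2 ≤ C * Real.log x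
    · exact hq h3
    · push Not at h3
      refine le_trans ?_ hlow
      rw [le_div_iff₀ hC0]
      set w := Real.log x
      have hwneg : w < 0 := by
        by_contra h
        push Not at h
        nlinarith
      have h4 := (abs_le.1 hw).1
      have h5 : Q * w ^ 2 ≤ -w := by nlinarith
      nlinarith
  · push Not at h2
    refine ⟨e, by rw [abs_of_pos he0], ?_⟩
    rw [max_eq_right (by linarith)]
    have hq := hquad e (by nlinarith)
    set y := Real.exp e with hy
    have hy0 : 0 < y := Real.exp_pos _
    have hCpos : 0 < C := by exact_mod_cast hC0
    have hb := one_add_mul_le_pow (a := (x - y) / y) (by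
      have : 0 ≤ (x - y) / y := div_nonneg (by linarith) hy0.le
      linarith) C
    have hxy : 1 + (x - y) / y = x / y := by
      field_simp
      ring
    rw [hxy, div_pow] at hb
    have hyC : y ^ C = y ^ (C - 1) * y := by
      rw [← pow_succ]
      congr 1
      omega
    have hb2 : y ^ C + C * (x - y) * y ^ (C - 1) ≤ x ^ C := by
      have h3 := mul_le_mul_of_nonneg_right hb (pow_pos hy0 C).le
      rw [div_mul_cancel₀ _ (pow_pos hy0 C).ne'] at h3
      refine le_trans (le_of_eq ?_) h3
      rw [hyC]
      field_simp
    have hyp : Real.exp 32 ≤ y ^ (C - 1) := by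
      rw [hy, ← Real.exp_nat_mul]
      apply Real.exp_le_exp.2
      rw [Nat.cast_sub (by omega)]
      simpa using hCe
    have h4 : C * (x - y) * Real.exp 32 ≤ C * (x - y) * y ^ (C - 1) :=
      mul_le_mul_of_nonneg_left hyp (mul_nonneg hC0.le (by linarith))
    rw [le_div_iff₀ hC0] at hq ⊢
    nlinarith

/-- The exponent `C` of the generating-function bound, a function of `δ` only. -/
def expC (δ : ℝ) : ℕ := ⌈1 + 32 * ((1 + 1152 / δ) * Real.exp 33)⌉₊

/-- Generating-function form of entropic independence. The multipliers `x` are first clipped to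
`exp w` with `w` small, where the quadratic bound applies; the part of `x` above `exp w` is paid for
linearly through `zsum_le_mul_exp`. -/
lemma zsum_mul_le (G : SimpleGraph V) {lam : V → ℝ} (hl : ∀ v, 0 < lam v) {m : ℕ}
    (hm : 1 ≤ m) (hdeg : ∀ v, (nbrs G Finset.univ v).card ≤ m + 2)
    {δ : ℝ} (hδ0 : 0 < δ) (hδ1 : δ < 1) (hle : ∀ v, lam v ≤ (1 - δ) * hcCrit (m + 2))
    (U : Finset V) (x : V → ℝ) (hx : ∀ v, 0 ≤ x v) :
    zsum G (fun v => lam v * x v) U ≤ zsum G lam U *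
      Real.exp ((∑ i ∈ U, occ G lam U i * (x i ^ expC δ - 1)) / expC δ) := by
  have hl' : ∀ v, 0 ≤ lam v := fun v => (hl v).le
  have hc := hcCrit_pos hm
  have hlc : ∀ v, lam v ≤ hcCrit (m + 2) := fun v => by nlinarith [hle v]
  set Q := (1 + 1152 / δ) * Real.exp 33 with hQ
  have he1 : (1 : ℝ) ≤ Real.exp 33 := Real.one_le_exp (by norm_num)
  have hdp : 0 < 1152 / δ := by positivity
  have hQ1 : 1 ≤ Q := by nlinarith
  have hC : 1 + 32 * Q ≤ (expC δ : ℝ) := Nat.le_ceil _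
  have hQd : 1 / Q ≤ δ / 4 := by
    rw [div_le_iff₀ (by linarith)]
    have h1 : 1152 / δ ≤ Q := by nlinarith
    have h2 : δ / 4 * (1152 / δ) = 288 := by
      field_simp
      norm_num
    nlinarith
  choose w hw1 hw2 using fun v => scalar_clip hQ1 hC (hx v)
  have h1 := zsum_le_mul_exp G (lam' := fun v => lam v * Real.exp (w v))
    (lam'' := fun v => lam v * x v) (fun v => mul_nonneg (hl' v) (Real.exp_pos _).le)
    (fun v => mul_nonneg (hl' v) (hx v)) U
  have h2 := log_zsum_quadratic G hl hm hdeg hδ0 hδ1 hle U w fun v => (hw1 v).trans hQd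
  have hz := zsum_pos G hl' U
  have hzw := zsum_pos G (lam := fun v => lam v * Real.exp (w v))
    (fun v => mul_nonneg (hl' v) (Real.exp_pos _).le) U
  rw [Real.log_le_iff_le_exp hzw, Real.exp_add, Real.exp_log hz] at h2
  refine h1.trans ((mul_le_mul_of_nonneg_right h2 (Real.exp_pos _).le).trans ?_)
  rw [mul_assoc, ← Real.exp_add, ← Finset.sum_add_distrib, Finset.sum_div]
  apply mul_le_mul_of_nonneg_left _ hz.le
  apply Real.exp_le_exp.2
  apply Finset.sum_le_sum
  intro i hi
  have ho := occ_nonneg G hl' U i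
  have h3 : max 0 (lam i * x i - lam i * Real.exp (w i)) ≤
      occ G lam U i * (Real.exp 32 * max 0 (x i - Real.exp (w i))) := by
    rw [← mul_sub, ← mul_zero (lam i), ← mul_max_of_nonneg _ _ (hl' i), mul_zero]
    have h4 := lam_le_occ G hl' hm hdeg hlc hi
    have h5 := mul_le_mul_of_nonneg_right h4 (le_max_left 0 (x i - Real.exp (w i)))
    linarith
  have h6 := mul_le_mul_of_nonneg_left (hw2 i) ho
  rw [← hQ]
  calc _ ≤ occ G lam U i * (w i + Q / 2 * w i ^ 2) +
        occ G lam U i * (Real.exp 32 * max 0 (x i - Real.exp (w i))) := add_le_add le_rfl h3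
    _ ≤ occ G lam U i * ((x i ^ expC δ - 1) / expC δ) := by rw [← mul_add]; exact h6
    _ = _ := (mul_div_assoc _ _ _).symm

/-! ### Relative entropy and continuous-time pinning -/

/-- Pointwise form of Gibbs' inequality. -/
lemma kl_term_ge {a b : ℝ} (ha : 0 ≤ a) (hb : 0 ≤ b) (hab : b = 0 → a = 0) :
    a - b ≤ a * Real.log (a / b) := by
  rcases ha.eq_or_lt with h | h
  · rw [← h]
    simpa using hb
  · have hb' : 0 < b := lt_of_le_of_ne hb fun h' => h.ne' (hab h'.symm)
    have h1 := Real.one_sub_inv_le_log_of_pos (div_pos h hb')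
    have h2 := mul_le_mul_of_nonneg_left h1 h.le
    refine le_trans (le_of_eq ?_) h2
    rw [inv_div]
    field_simp

/-- Log-sum inequality. -/
lemma log_sum_ineq {ι : Type*} (I : Finset ι) (a b : ι → ℝ) (ha : ∀ i ∈ I, 0 ≤ a i)
    (hb : ∀ i ∈ I, 0 ≤ b i) (hab : ∀ i ∈ I, b i = 0 → a i = 0) :
    (∑ i ∈ I, a i) * Real.log ((∑ i ∈ I, a i) / ∑ i ∈ I, b i) ≤
      ∑ i ∈ I, a i * Real.log (a i / b i) := by
  rcases (Finset.sum_nonneg ha).eq_or_lt with h | h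
  · have h0 : ∀ i ∈ I, a i = 0 := (Finset.sum_eq_zero_iff_of_nonneg ha).1 h.symm
    rw [← h, zero_mul]
    apply le_of_eq
    symm
    apply Finset.sum_eq_zero
    intro i hi
    rw [h0 i hi, zero_mul]
  · have hB : 0 < ∑ i ∈ I, b i := by
      apply lt_of_le_of_ne (Finset.sum_nonneg hb)
      intro h'
      have h0 := (Finset.sum_eq_zero_iff_of_nonneg hb).1 h'.symm
      have : ∑ i ∈ I, a i = 0 := Finset.sum_eq_zero fun i hi => hab i hi (h0 i hi)
      linarith
    set c := (∑ i ∈ I, a i) / ∑ i ∈ I, b i with hc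
    have hc0 : 0 < c := div_pos h hB
    have hterm : ∀ i ∈ I, a i * Real.log c + (a i - c * b i) ≤ a i * Real.log (a i / b i) := by
      intro i hi
      have h1 := kl_term_ge (ha i hi) (mul_nonneg hc0.le (hb i hi)) (fun h0 => by
        rcases mul_eq_zero.1 h0 with h2 | h2
        · linarith
        · exact hab i hi h2)
      rcases (ha i hi).eq_or_lt with h2 | h2
      · rw [← h2]
        have := mul_nonneg hc0.le (hb i hi)
        simp only [zero_mul]
        linarith
      · have hbi : b i ≠ 0 := fun h3 => h2.ne' (hab i hi h3)
        have h3 : Real.log (a i / b i) = Real.log c + Real.log (a i / (c * b i)) := by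
          rw [← Real.log_mul hc0.ne' (div_ne_zero h2.ne' (mul_ne_zero hc0.ne' hbi))]
          congr 1
          field_simp
        rw [h3]
        linarith
    have h4 := Finset.sum_le_sum hterm
    rw [Finset.sum_add_distrib, Finset.sum_sub_distrib, ← Finset.sum_mul, ← Finset.mul_sum] at h4
    have h5 : c * ∑ i ∈ I, b i = ∑ i ∈ I, a i := by
      rw [hc]
      field_simp
    rw [h5] at h4
    linarith

/-- Data-processing inequality for KL divergence. -/
lemma data_processing {α β : Type*} [Fintype α] [Fintype β] (q μ : α → ℝ) (K : α → β → ℝ)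
    (hq : ∀ x, 0 ≤ q x) (hμ : ∀ x, 0 ≤ μ x) (hac : ∀ x, μ x = 0 → q x = 0)
    (hK : ∀ x y, 0 ≤ K x y) (hrow : ∀ x, q x ≠ 0 → ∑ y, K x y = 1) :
    KLdiv (fun y => ∑ x, q x * K x y) (fun y => ∑ x, μ x * K x y) ≤ KLdiv q μ := by
  unfold KLdiv
  calc ∑ y, (∑ x, q x * K x y) * Real.log ((∑ x, q x * K x y) / ∑ x, μ x * K x y)
      ≤ ∑ y, ∑ x, (q x * K x y) * Real.log ((q x * K x y) / (μ x * K x y)) := by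
        apply Finset.sum_le_sum
        intro y _
        apply log_sum_ineq
        · exact fun x _ => mul_nonneg (hq x) (hK x y)
        · exact fun x _ => mul_nonneg (hμ x) (hK x y)
        · intro x _ h
          rcases mul_eq_zero.1 h with h | h
          · rw [hac x h, zero_mul]
          · rw [h, mul_zero]
    _ = ∑ x, ∑ y, (q x * Real.log (q x / μ x)) * K x y := by
        rw [Finset.sum_comm]
        apply Finset.sum_congr rfl
        intro x _
        apply Finset.sum_congr rfl
        intro y _
        by_cases h : K x y = 0
        · rw [h]
          simp
        · rw [mul_div_mul_right _ _ h]
          ring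
    _ = ∑ x, q x * Real.log (q x / μ x) := by
        apply Finset.sum_congr rfl
        intro x _
        rw [← Finset.mul_sum]
        by_cases h : q x = 0
        · rw [h]
          simp
        · rw [hrow x h, mul_one]

/-- Mass of the configurations containing `T`, each site of `σ \ T` being discounted by `s`. Up to
the factor `(1 - s) ^ |T|` it is the probability that exactly the sites of `T` get pinned when every
occupied site is pinned independently with probability `1 - s`. -/
def pin (ν : Finset V → ℝ) (s : ℝ) (T : Finset V) : ℝ :=
  ∑ σ, if T ⊆ σ then ν σ * s ^ (σ \ T).card else 0

lemma pin_nonneg {ν : Finset V → ℝ} (hν : ∀ σ, 0 ≤ ν σ) {s : ℝ} (hs : 0 ≤ s) (T : Finset V) :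
    0 ≤ pin ν s T := by
  apply Finset.sum_nonneg
  intro σ _
  split_ifs
  · exact mul_nonneg (hν σ) (pow_nonneg hs _)
  · exact le_rfl

lemma eq_zero_of_pin {ν : Finset V → ℝ} (hν : ∀ σ, 0 ≤ ν σ) {s : ℝ} (hs : 0 < s) {T : Finset V}
    (h : pin ν s T = 0) : ∀ σ, T ⊆ σ → ν σ = 0 := by
  intro σ hσ
  have h1 := (Finset.sum_eq_zero_iff_of_nonneg (fun σ _ => by
    split_ifs
    · exact mul_nonneg (hν σ) (pow_nonneg hs.le _)
    · exact le_rfl)).1 h σ (Finset.mem_univ σ)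
  rw [if_pos hσ] at h1
  rcases mul_eq_zero.1 h1 with h2 | h2
  · exact h2
  · exact absurd h2 (pow_pos hs _).ne'

lemma pin_eq_zero {ν : Finset V → ℝ} {T : Finset V} (h : ∀ σ, T ⊆ σ → ν σ = 0) (s : ℝ) :
    pin ν s T = 0 := by
  apply Finset.sum_eq_zero
  intro σ _
  split_ifs with hσ
  · rw [h σ hσ, zero_mul]
  · rfl

lemma pin_ac {ν μ : Finset V → ℝ} (hμ : ∀ σ, 0 ≤ μ σ)
    (hac : ∀ σ, μ σ = 0 → ν σ = 0) {s : ℝ} (hs : 0 < s) {T : Finset V} (h : pin μ s T = 0) :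
    pin ν s T = 0 :=
  pin_eq_zero (fun σ hσ => hac σ (eq_zero_of_pin hμ hs h σ hσ)) s

lemma pin_insert_eq_zero {ν : Finset V → ℝ} (hν : ∀ σ, 0 ≤ ν σ) {s : ℝ} (hs : 0 < s)
    {T : Finset V} (h : pin ν s T = 0) (i : V) : pin ν s (insert i T) = 0 :=
  pin_eq_zero (fun σ hσ => eq_zero_of_pin hν hs h σ ((Finset.subset_insert i T).trans hσ)) s

lemma card_sdiff_insert {σ T : Finset V} {i : V} (hi : i ∈ σ) (hT : i ∉ T) :
    (σ \ T).card = (σ \ insert i T).card + 1 := by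
  have : σ \ insert i T = (σ \ T).erase i := by
    ext x
    simp only [Finset.mem_sdiff, Finset.mem_insert, Finset.mem_erase]
    tauto
  rw [this, Finset.card_erase_add_one (Finset.mem_sdiff.2 ⟨hi, hT⟩)]

lemma pin_insert (ν : Finset V → ℝ) (s : ℝ) {T : Finset V} {i : V} (hi : i ∉ T) :
    s * pin ν s (insert i T) =
      ∑ σ, if T ⊆ σ then ν σ * s ^ (σ \ T).card * (if i ∈ σ then 1 else 0) else 0 := by
  rw [pin, Finset.mul_sum]
  apply Finset.sum_congr rfl
  intro σ _
  by_cases h1 : T ⊆ σ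
  · by_cases h2 : i ∈ σ
    · rw [if_pos (Finset.insert_subset h2 h1), if_pos h1, if_pos h2, card_sdiff_insert h2 hi]
      ring
    · rw [if_neg fun h => h2 (h (Finset.mem_insert_self i T)), if_pos h1, if_neg h2]
      ring
  · rw [if_neg fun h => h1 ((Finset.subset_insert i T).trans h), if_neg h1, mul_zero]

lemma hasDerivAt_pin (ν : Finset V → ℝ) (s : ℝ) (T : Finset V) :
    HasDerivAt (fun s => pin ν s T) (∑ i ∈ Finset.univ \ T, pin ν s (insert i T)) s := by
  unfold pin
  rw [Finset.sum_comm]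
  apply HasDerivAt.fun_sum
  intro σ _
  by_cases h : T ⊆ σ
  · simp only [if_pos h]
    have h1 : ∑ i ∈ Finset.univ \ T,
        (if insert i T ⊆ σ then ν σ * s ^ (σ \ insert i T).card else 0) =
        ν σ * (((σ \ T).card : ℝ) * s ^ ((σ \ T).card - 1)) := by
      have h2 : ∀ i ∈ Finset.univ \ T,
          (if insert i T ⊆ σ then ν σ * s ^ (σ \ insert i T).card else 0) =
          if i ∈ σ \ T then ν σ * s ^ ((σ \ T).card - 1) else 0 := by
        intro i hi
        have hiT : i ∉ T := (Finset.mem_sdiff.1 hi).2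
        by_cases h3 : i ∈ σ
        · rw [if_pos (Finset.insert_subset h3 h), if_pos (Finset.mem_sdiff.2 ⟨h3, hiT⟩),
            card_sdiff_insert h3 hiT, Nat.add_sub_cancel]
        · rw [if_neg fun h' => h3 (h' (Finset.mem_insert_self i T)),
            if_neg fun h' => h3 (Finset.mem_sdiff.1 h').1]
      rw [Finset.sum_congr rfl h2, Finset.sum_ite_mem, Finset.inter_eq_right.2
        (Finset.sdiff_subset_sdiff (Finset.subset_univ σ) le_rfl), Finset.sum_const, nsmul_eq_mul]
      ring
    rw [h1]
    exact (hasDerivAt_pow _ s).const_mul (ν σ)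
  · simp only [if_neg h]
    have : ∑ i ∈ Finset.univ \ T,
        (if insert i T ⊆ σ then ν σ * s ^ (σ \ insert i T).card else 0) = 0 := by
      apply Finset.sum_eq_zero
      intro i _
      rw [if_neg fun h' => h ((Finset.subset_insert i T).trans h')]
    rw [this]
    exact hasDerivAt_const s 0

/-- Log-likelihood ratio of the pinned set `T`. -/
def llr (ν μ : Finset V → ℝ) (s : ℝ) (T : Finset V) : ℝ := Real.log (pin ν s T / pin μ s T)

/-- Entropic independence at rate `C` of all pinned and tilted versions of `μ`, tested against `ν`
(both sides are multiplied by the mass `pin ν s T`). -/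
def EntIndep (C : ℝ) (ν μ : Finset V → ℝ) : Prop :=
  ∀ s : ℝ, 0 < s → s ≤ 1 → ∀ T : Finset V,
    ∑ i ∈ Finset.univ \ T, (s * pin ν s (insert i T) * (llr ν μ s (insert i T) - llr ν μ s T)
        - s * pin ν s (insert i T) + pin ν s T * (s * pin μ s (insert i T) / pin μ s T)) ≤
      C * ∑ σ, if T ⊆ σ then
        ν σ * s ^ (σ \ T).card * (Real.log (ν σ / μ σ) - llr ν μ s T) else 0

/-- KL divergence between the laws of the pinned set under `ν` and under `μ`. -/
def pinKL (ν μ : Finset V → ℝ) (s : ℝ) : ℝ :=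
  ∑ T : Finset V, (1 - s) ^ T.card * (pin ν s T * llr ν μ s T)

lemma hasDerivAt_pinKL {ν μ : Finset V → ℝ} (hν : ∀ σ, 0 ≤ ν σ) (hμ : ∀ σ, 0 ≤ μ σ)
    (hac : ∀ σ, μ σ = 0 → ν σ = 0) {s : ℝ} (hs : 0 < s) :
    HasDerivAt (pinKL ν μ)
      (-∑ T : Finset V, (1 - s) ^ T.card * ∑ i ∈ Finset.univ \ T,
        (pin ν s (insert i T) * (llr ν μ s (insert i T) - llr ν μ s T)
          - pin ν s (insert i T) + pin ν s T * (pin μ s (insert i T) / pin μ s T))) s := by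
  have hterm : ∀ T : Finset V, HasDerivAt
      (fun s => (1 - s) ^ T.card * (pin ν s T * llr ν μ s T))
      (-((T.card : ℝ) * (1 - s) ^ (T.card - 1) * (pin ν s T * llr ν μ s T)) +
        (1 - s) ^ T.card * ∑ i ∈ Finset.univ \ T, (pin ν s (insert i T) * llr ν μ s T +
          pin ν s (insert i T) - pin ν s T * (pin μ s (insert i T) / pin μ s T))) s := by
    intro T
    have hpow : HasDerivAt (fun s : ℝ => (1 - s) ^ T.card)
        (-((T.card : ℝ) * (1 - s) ^ (T.card - 1))) s := by
      have h := ((hasDerivAt_id s).const_sub 1).pow T.card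
      simp only [id, mul_neg, mul_one] at h
      exact h
    have hent : HasDerivAt (fun s => pin ν s T * llr ν μ s T)
        (∑ i ∈ Finset.univ \ T, (pin ν s (insert i T) * llr ν μ s T +
          pin ν s (insert i T) - pin ν s T * (pin μ s (insert i T) / pin μ s T))) s := by
      by_cases h0 : pin ν s T = 0
      · have h1 : (fun s => pin ν s T * llr ν μ s T) = fun _ => 0 := by
          funext s'
          rw [pin_eq_zero (eq_zero_of_pin hν hs h0) s', zero_mul]
        have h2 : ∑ i ∈ Finset.univ \ T, (pin ν s (insert i T) * llr ν μ s T +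
          pin ν s (insert i T) - pin ν s T * (pin μ s (insert i T) / pin μ s T)) = 0 := by
          apply Finset.sum_eq_zero
          intro i _
          rw [pin_insert_eq_zero hν hs h0, h0]
          ring
        rw [h1, h2]
        exact hasDerivAt_const s 0
      · have hB : pin μ s T ≠ 0 := fun h => h0 (pin_ac hμ hac hs h)
        have hA' := hasDerivAt_pin ν s T
        have hB' := hasDerivAt_pin μ s T
        have h := hA'.mul ((hA'.div hB' hB).log (div_ne_zero h0 hB))
        have e : (∑ i ∈ Finset.univ \ T, (pin ν s (insert i T) * llr ν μ s T +
            pin ν s (insert i T) - pin ν s T * (pin μ s (insert i T) / pin μ s T))) =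
            (∑ i ∈ Finset.univ \ T, pin ν s (insert i T)) * Real.log (pin ν s T / pin μ s T) +
            pin ν s T * (((∑ i ∈ Finset.univ \ T, pin ν s (insert i T)) * pin μ s T -
              pin ν s T * ∑ i ∈ Finset.univ \ T, pin μ s (insert i T)) / pin μ s T ^ 2 /
              (pin ν s T / pin μ s T)) := by
          rw [Finset.sum_sub_distrib, Finset.sum_add_distrib, ← Finset.sum_mul, ← Finset.mul_sum,
            ← Finset.sum_div]
          generalize ∑ i ∈ Finset.univ \ T, pin ν s (insert i T) = x
          generalize ∑ i ∈ Finset.univ \ T, pin μ s (insert i T) = y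
          rw [llr]
          field_simp
          ring
        rw [e]
        exact h
    have h := hpow.mul hent
    rw [neg_mul] at h
    exact h
  have hsum := HasDerivAt.fun_sum (u := Finset.univ) fun T (_ : T ∈ Finset.univ) => hterm T
  -- differentiating the factor `(1 - s) ^ |T|` shifts the index from `T` to the sets `insert i T`
  have hreidx : ∑ T : Finset V, (T.card : ℝ) * (1 - s) ^ (T.card - 1) *
      (pin ν s T * llr ν μ s T) =
      ∑ T : Finset V, (1 - s) ^ T.card * ∑ i ∈ Finset.univ \ T,
        pin ν s (insert i T) * llr ν μ s (insert i T) := by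
    have h1 : ∀ T : Finset V, (T.card : ℝ) * (1 - s) ^ (T.card - 1) *
        (pin ν s T * llr ν μ s T) =
        ∑ i ∈ T, (1 - s) ^ (T.card - 1) * (pin ν s T * llr ν μ s T) := by
      intro T
      rw [Finset.sum_const, nsmul_eq_mul, mul_assoc]
    rw [Finset.sum_congr rfl fun T _ => h1 T]
    simp_rw [Finset.mul_sum]
    rw [Finset.sum_sigma', Finset.sum_sigma']
    refine Finset.sum_bij' (fun x _ => ⟨x.1.erase x.2, x.2⟩) (fun x _ => ⟨insert x.2 x.1, x.2⟩)
      ?_ ?_ ?_ ?_ ?_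
    · rintro ⟨T, i⟩ h
      simp
    · rintro ⟨T, i⟩ h
      simp
    · rintro ⟨T, i⟩ h
      simp only [Finset.mem_sigma, Finset.mem_univ, true_and] at h
      simp [Finset.insert_erase h]
    · rintro ⟨T, i⟩ h
      simp only [Finset.mem_sigma, Finset.mem_univ, true_and, Finset.mem_sdiff] at h
      simp [Finset.erase_insert h]
    · rintro ⟨T, i⟩ h
      simp only [Finset.mem_sigma, Finset.mem_univ, true_and] at h
      simp only [Finset.insert_erase h, Finset.card_erase_of_mem h]
  have e : (-∑ T : Finset V, (1 - s) ^ T.card * ∑ i ∈ Finset.univ \ T,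
        (pin ν s (insert i T) * (llr ν μ s (insert i T) - llr ν μ s T)
          - pin ν s (insert i T) + pin ν s T * (pin μ s (insert i T) / pin μ s T))) =
      ∑ T : Finset V, (-((T.card : ℝ) * (1 - s) ^ (T.card - 1) * (pin ν s T * llr ν μ s T)) +
        (1 - s) ^ T.card * ∑ i ∈ Finset.univ \ T, (pin ν s (insert i T) * llr ν μ s T +
          pin ν s (insert i T) - pin ν s T * (pin μ s (insert i T) / pin μ s T))) := by
    rw [Finset.sum_add_distrib, Finset.sum_neg_distrib, hreidx, ← Finset.sum_neg_distrib,
      ← Finset.sum_neg_distrib, ← Finset.sum_add_distrib]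
    apply Finset.sum_congr rfl
    intro T _
    rw [← mul_neg, ← mul_neg, ← mul_add, ← Finset.sum_neg_distrib, ← Finset.sum_neg_distrib,
      ← Finset.sum_add_distrib]
    congr 1
    apply Finset.sum_congr rfl
    intro i _
    ring
  rw [e]
  exact hsum

/-- Integrating entropic independence over the pinning time `s` from `1` down to `θ`. -/
lemma pinKL_le {C : ℕ} {ν μ : Finset V → ℝ} (hν : ∀ σ, 0 ≤ ν σ) (hμ : ∀ σ, 0 ≤ μ σ)
    (hν1 : ∑ σ, ν σ = 1) (hμ1 : ∑ σ, μ σ = 1)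
    (hac : ∀ σ, μ σ = 0 → ν σ = 0) (hEI : EntIndep C ν μ) {θ : ℝ} (hθ0 : 0 < θ) (hθ1 : θ ≤ 1) :
    pinKL ν μ θ ≤ (1 - θ ^ C) * KLdiv ν μ := by
  set D := KLdiv ν μ with hD
  have hpin1 : pinKL ν μ 1 = 0 := by
    unfold pinKL
    rw [Finset.sum_eq_single ∅]
    · have h1 : ∀ ρ : Finset V → ℝ, pin ρ 1 ∅ = ∑ σ, ρ σ := by
        intro ρ
        simp [pin]
      simp [llr, h1, hν1, hμ1]
    · intro T _ hT
      rw [sub_self, zero_pow (Finset.card_ne_zero.2 (Finset.nonempty_iff_ne_empty.2 hT)), zero_mul]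
    · simp
  have hid : ∀ s : ℝ, ∑ T : Finset V, (1 - s) ^ T.card * (∑ σ, if T ⊆ σ then
        ν σ * s ^ (σ \ T).card * (Real.log (ν σ / μ σ) - llr ν μ s T) else 0) =
      D - pinKL ν μ s := by
    intro s
    have h1 : ∀ T : Finset V, (∑ σ, if T ⊆ σ then
        ν σ * s ^ (σ \ T).card * (Real.log (ν σ / μ σ) - llr ν μ s T) else 0) =
        (∑ σ, if T ⊆ σ then s ^ (σ \ T).card * (ν σ * Real.log (ν σ / μ σ)) else 0) -
          pin ν s T * llr ν μ s T := by
      intro T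
      rw [pin, Finset.sum_mul, ← Finset.sum_sub_distrib]
      apply Finset.sum_congr rfl
      intro σ _
      split_ifs <;> ring
    simp_rw [h1, mul_sub]
    rw [Finset.sum_sub_distrib]
    congr 1
    simp_rw [Finset.mul_sum]
    rw [Finset.sum_comm, hD, KLdiv]
    apply Finset.sum_congr rfl
    intro σ _
    have h2 : ∑ T ∈ σ.powerset, (1 - s) ^ T.card * s ^ (σ.card - T.card) = 1 := by
      rw [Finset.sum_pow_mul_eq_add_pow]
      simp
    calc ∑ T : Finset V, (1 - s) ^ T.card *
          (if T ⊆ σ then s ^ (σ \ T).card * (ν σ * Real.log (ν σ / μ σ)) else 0)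
        = ∑ T ∈ σ.powerset, (1 - s) ^ T.card * s ^ (σ.card - T.card) *
          (ν σ * Real.log (ν σ / μ σ)) := by
          rw [← Finset.sum_subset (Finset.subset_univ σ.powerset)]
          · apply Finset.sum_congr rfl
            intro T hT
            have hT' := Finset.mem_powerset.1 hT
            rw [if_pos hT', Finset.card_sdiff_of_subset hT']
            ring
          · intro T _ hT
            rw [if_neg fun h => hT (Finset.mem_powerset.2 h), mul_zero]
      _ = _ := by rw [← Finset.sum_mul, h2, one_mul]
  set d : ℝ → ℝ := fun s => ∑ T : Finset V, (1 - s) ^ T.card * ∑ i ∈ Finset.univ \ T,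
        (pin ν s (insert i T) * (llr ν μ s (insert i T) - llr ν μ s T)
          - pin ν s (insert i T) + pin ν s T * (pin μ s (insert i T) / pin μ s T)) with hd
  have hder : ∀ s, 0 < s → HasDerivAt (fun s => D - pinKL ν μ s) (d s) s := by
    intro s hs
    have h := (hasDerivAt_pinKL hν hμ hac hs).const_sub D
    rwa [neg_neg] at h
  have hdle : ∀ s, 0 < s → s ≤ 1 → s * d s ≤ C * (D - pinKL ν μ s) := by
    intro s hs0 hs1
    rw [← hid s, hd, Finset.mul_sum, Finset.mul_sum]
    apply Finset.sum_le_sum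
    intro T _
    have h := mul_le_mul_of_nonneg_left (hEI s hs0 hs1 T)
      (pow_nonneg (by linarith : 0 ≤ 1 - s) T.card)
    refine le_trans (le_of_eq ?_) (h.trans (le_of_eq (by ring)))
    rw [mul_left_comm]
    congr 1
    rw [Finset.mul_sum]
    apply Finset.sum_congr rfl
    intro i _
    ring
  -- Grönwall: `D - pinKL` has logarithmic derivative at most `C / s`
  have hanti : AntitoneOn (fun s => (D - pinKL ν μ s) / s ^ C) (Set.Icc θ 1) := by
    have hdq : ∀ s, 0 < s → HasDerivAt (fun s => (D - pinKL ν μ s) / s ^ C)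
        ((d s * s ^ C - (D - pinKL ν μ s) * (C * s ^ (C - 1))) / (s ^ C) ^ 2) s := by
      intro s hs
      exact (hder s hs).div (hasDerivAt_pow C s) (pow_pos hs C).ne'
    apply antitoneOn_of_deriv_nonpos (convex_Icc θ 1)
    · intro s hs
      exact (hdq s (lt_of_lt_of_le hθ0 hs.1)).continuousAt.continuousWithinAt
    · intro s hs
      have hs' := interior_subset hs
      exact (hdq s (lt_of_lt_of_le hθ0 hs'.1)).differentiableAt.differentiableWithinAt
    · intro s hs
      have hs' := interior_subset hs
      have hs0 : 0 < s := lt_of_lt_of_le hθ0 hs'.1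
      rw [(hdq s hs0).deriv]
      apply div_nonpos_of_nonpos_of_nonneg _ (sq_nonneg _)
      have h1 := hdle s hs0 hs'.2
      rcases Nat.eq_zero_or_pos C with hC | hC
      · rw [hC] at h1 ⊢
        simp only [Nat.cast_zero, zero_mul] at h1
        have : d s ≤ 0 := by
          by_contra h
          push Not at h
          nlinarith [mul_pos hs0 h]
        simpa using this
      · have hp : s ^ C = s ^ (C - 1) * s := by
          rw [← pow_succ]
          congr 1
          omega
        rw [hp]
        have h2 := mul_le_mul_of_nonneg_left h1 (pow_pos hs0 (C - 1)).le
        linarith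
  have h := hanti (Set.left_mem_Icc.2 hθ1) (Set.right_mem_Icc.2 hθ1) hθ1
  simp only [hpin1, sub_zero, one_pow, div_one] at h
  rw [le_div_iff₀ (pow_pos hθ0 C)] at h
  linarith

/-! ### Entropic independence of the hardcore model -/

/-- Sites that are neither in `T` nor adjacent to `T`: those left undetermined once `T` is
occupied. -/
def free (G : SimpleGraph V) (T : Finset V) : Finset V :=
  Finset.univ.filter fun u => u ∉ T ∧ ∀ t ∈ T, ¬ G.Adj t u

/-- Pinning `T` to be occupied leaves a hardcore model on the free sites. -/
lemma pin_reindex (G : SimpleGraph V) (lam : V → ℝ) {T : Finset V} (hT : IndepSet G T)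
    (f : Finset V → ℝ) :
    ∑ σ, (if T ⊆ σ then hcWeight G lam σ * f (σ \ T) else 0) =
      (∏ v ∈ T, lam v) * wsum G lam (free G T) f := by
  have h1 : ∑ σ, (if T ⊆ σ then hcWeight G lam σ * f (σ \ T) else 0) =
      ∑ σ ∈ Finset.univ.filter (fun σ => T ⊆ σ ∧ IndepSet G σ),
        (∏ v ∈ σ, lam v) * f (σ \ T) := by
    rw [Finset.sum_filter]
    apply Finset.sum_congr rfl
    intro σ _
    by_cases h : T ⊆ σ <;> by_cases h' : IndepSet G σ <;> simp [h, h', hcWeight]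
  have h2 : wsum G lam (free G T) f =
      ∑ ρ ∈ (free G T).powerset.filter (IndepSet G), (∏ v ∈ ρ, lam v) * f ρ := by
    rw [wsum, Finset.sum_filter]
    apply Finset.sum_congr rfl
    intro σ _
    by_cases h' : IndepSet G σ <;> simp [h', hcWeight]
  rw [h1, h2, Finset.mul_sum]
  refine Finset.sum_bij' (fun σ _ => σ \ T) (fun ρ _ => T ∪ ρ) ?_ ?_ ?_ ?_ ?_
  · intro σ hσ
    obtain ⟨hTσ, hσ⟩ := (Finset.mem_filter.1 hσ).2
    rw [Finset.mem_filter, Finset.mem_powerset]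
    refine ⟨fun u hu => ?_, fun u hu w hw =>
      hσ u (Finset.mem_sdiff.1 hu).1 w (Finset.mem_sdiff.1 hw).1⟩
    rw [Finset.mem_sdiff] at hu
    exact Finset.mem_filter.2 ⟨Finset.mem_univ u, hu.2, fun t ht => hσ t (hTσ ht) u hu.1⟩
  · intro ρ hρ
    rw [Finset.mem_filter, Finset.mem_powerset] at hρ
    refine Finset.mem_filter.2 ⟨Finset.mem_univ _, Finset.subset_union_left, ?_⟩
    intro u hu w hw
    rcases Finset.mem_union.1 hu with hu | hu <;> rcases Finset.mem_union.1 hw with hw | hw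
    · exact hT u hu w hw
    · exact (Finset.mem_filter.1 (hρ.1 hw)).2.2 u hu
    · exact fun h => (Finset.mem_filter.1 (hρ.1 hu)).2.2 w hw h.symm
    · exact hρ.2 u hu w hw
  · intro σ hσ
    exact Finset.union_sdiff_of_subset (Finset.mem_filter.1 hσ).2.1
  · intro ρ hρ
    rw [Finset.mem_filter, Finset.mem_powerset] at hρ
    have hd : Disjoint T ρ := Finset.disjoint_left.2 fun u hu hu' =>
      (Finset.mem_filter.1 (hρ.1 hu')).2.1 hu
    exact Finset.union_sdiff_cancel_left hd
  · intro σ hσ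
    have hTσ := (Finset.mem_filter.1 hσ).2.1
    rw [← mul_assoc, mul_comm (∏ v ∈ T, lam v), Finset.prod_sdiff hTσ]

lemma pin_hardcore (G : SimpleGraph V) (lam : V → ℝ) {T : Finset V} (hT : IndepSet G T)
    (s : ℝ) (f : Finset V → ℝ) :
    ∑ σ, (if T ⊆ σ then hardcore G lam σ * s ^ (σ \ T).card * f (σ \ T) else 0) =
      (∏ v ∈ T, lam v) / (∑ τ, hcWeight G lam τ) *
        wsum G (fun v => lam v * s) (free G T) f := by
  have h1 : wsum G (fun v => lam v * s) (free G T) f =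
      wsum G lam (free G T) fun ρ => s ^ ρ.card * f ρ := by
    unfold wsum
    apply Finset.sum_congr rfl
    intro ρ _
    rw [hcWeight_mul G lam (fun _ => s) ρ, Finset.prod_const]
    ring
  rw [h1, div_mul_eq_mul_div, ← pin_reindex G lam hT, Finset.sum_div]
  apply Finset.sum_congr rfl
  intro σ _
  split_ifs
  · rw [hardcore]
    ring
  · rw [zero_div]

lemma sum_hcWeight_pos (G : SimpleGraph V) {lam : V → ℝ} (hl : ∀ v, 0 ≤ lam v) :
    0 < ∑ τ, hcWeight G lam τ := by
  have h := zsum_pos G hl Finset.univ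
  simpa [zsum, wsum] using h

/-- The generating-function bound for every pinning and tilt of the hardcore model. -/
lemma pin_gen_le (G : SimpleGraph V) {lam : V → ℝ} (hl : ∀ v, 0 < lam v) {m : ℕ} (hm : 1 ≤ m)
    (hdeg : ∀ v, (nbrs G Finset.univ v).card ≤ m + 2) {δ : ℝ} (hδ0 : 0 < δ) (hδ1 : δ < 1)
    (hle : ∀ v, lam v ≤ (1 - δ) * hcCrit (m + 2)) {s : ℝ} (hs0 : 0 < s) (hs1 : s ≤ 1)
    {T : Finset V} (hT : IndepSet G T) (x : V → ℝ) (hx : ∀ v, 0 ≤ x v) :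
    ∑ σ, (if T ⊆ σ then hardcore G lam σ * s ^ (σ \ T).card * ∏ v ∈ σ \ T, x v else 0) ≤
      pin (hardcore G lam) s T * Real.exp ((∑ i ∈ Finset.univ \ T,
        s * pin (hardcore G lam) s (insert i T) / pin (hardcore G lam) s T *
          (x i ^ expC δ - 1)) / expC δ) := by
  have hl0 : ∀ v, 0 ≤ lam v := fun v => (hl v).le
  have hls : ∀ v, 0 < lam v * s := fun v => mul_pos (hl v) hs0
  set c : ℝ := (∏ v ∈ T, lam v) / ∑ τ, hcWeight G lam τ with hc
  have hc0 : 0 < c := div_pos (Finset.prod_pos fun v _ => hl v) (sum_hcWeight_pos G hl0)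
  have hpin : pin (hardcore G lam) s T = c * zsum G (fun v => lam v * s) (free G T) := by
    rw [zsum, ← pin_hardcore G lam hT s]
    simp only [mul_one]
    rfl
  have hz : 0 < zsum G (fun v => lam v * s) (free G T) := zsum_pos G (fun v => (hls v).le) _
  have hocc : ∀ i ∈ Finset.univ \ T,
      s * pin (hardcore G lam) s (insert i T) / pin (hardcore G lam) s T =
        occ G (fun v => lam v * s) (free G T) i := by
    intro i hi
    have hiT := (Finset.mem_sdiff.1 hi).2
    have h : s * pin (hardcore G lam) s (insert i T) =
        c * wsum G (fun v => lam v * s) (free G T) (fun σ => if i ∈ σ then 1 else 0) := by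
      rw [pin_insert _ _ hiT, ← pin_hardcore G lam hT s]
      simp [Finset.mem_sdiff, hiT]
    rw [h, hpin, occ, mul_div_mul_left _ _ hc0.ne']
  have hsum : ∑ i ∈ Finset.univ \ T,
        s * pin (hardcore G lam) s (insert i T) / pin (hardcore G lam) s T *
          (x i ^ expC δ - 1) =
      ∑ i ∈ free G T, occ G (fun v => lam v * s) (free G T) i * (x i ^ expC δ - 1) := by
    rw [Finset.sum_congr rfl fun i hi => by rw [hocc i hi]]
    symm
    apply Finset.sum_subset
    · intro u hu
      exact Finset.mem_sdiff.2 ⟨Finset.mem_univ u, (Finset.mem_filter.1 hu).2.1⟩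
    · intro i _ hi
      rw [occ_eq_zero G _ hi, zero_mul]
  have hgen : wsum G (fun v => lam v * s) (free G T) (fun ρ => ∏ v ∈ ρ, x v) =
      zsum G (fun v => lam v * s * x v) (free G T) := by
    unfold zsum wsum
    apply Finset.sum_congr rfl
    intro ρ _
    rw [hcWeight_mul G (fun v => lam v * s) x, mul_one]
  rw [pin_hardcore G lam hT s (fun ρ => ∏ v ∈ ρ, x v), hsum, hgen, hpin, mul_assoc]
  refine mul_le_mul_of_nonneg_left ?_ hc0.le
  refine zsum_mul_le G hls hm hdeg hδ0 hδ1 (fun v => ?_) _ x hx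
  exact (mul_le_of_le_one_right (hl0 v) hs1).trans (hle v)

/-- A generating-function bound for all pinnings and tilts of `μ` gives entropic independence:
Gibbs' inequality against the measure proportional to `μ σ * ∏ x v`, where `x v ^ C` is the ratio of
the marginals of `ν` and `μ` at `v`. -/
lemma entIndep_of_gen {C : ℕ} (hC : C ≠ 0) {ν μ : Finset V → ℝ} (hν : ∀ σ, 0 ≤ ν σ)
    (hμ : ∀ σ, 0 ≤ μ σ) (hac : ∀ σ, μ σ = 0 → ν σ = 0)
    (hgen : ∀ s : ℝ, 0 < s → s ≤ 1 → ∀ T : Finset V, pin μ s T ≠ 0 → ∀ x : V → ℝ,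
      (∀ v, 0 ≤ x v) →
      ∑ σ, (if T ⊆ σ then μ σ * s ^ (σ \ T).card * ∏ v ∈ σ \ T, x v else 0) ≤
        pin μ s T * Real.exp ((∑ i ∈ Finset.univ \ T,
          s * pin μ s (insert i T) / pin μ s T * (x i ^ C - 1)) / C)) :
    EntIndep C ν μ := by
  intro s hs0 hs1 T
  by_cases hA0 : pin ν s T = 0
  · apply le_of_eq
    rw [Finset.sum_eq_zero, Finset.sum_eq_zero, mul_zero]
    · intro σ _
      split_ifs with h
      · rw [eq_zero_of_pin hν hs0 hA0 σ h]
        ring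
      · rfl
    · intro i _
      rw [pin_insert_eq_zero hν hs0 hA0, hA0]
      ring
  have hB0 : pin μ s T ≠ 0 := fun h => hA0 (pin_ac hμ hac hs0 h)
  have hA : 0 < pin ν s T := lt_of_le_of_ne (pin_nonneg hν hs0.le T) (Ne.symm hA0)
  have hB : 0 < pin μ s T := lt_of_le_of_ne (pin_nonneg hμ hs0.le T) (Ne.symm hB0)
  set A := pin ν s T with hAdef
  set B := pin μ s T with hBdef
  have hC0 : (0 : ℝ) < C := by exact_mod_cast Nat.pos_of_ne_zero hC
  set r : V → ℝ := fun i => pin ν s (insert i T) * B / (A * pin μ s (insert i T)) with hr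
  have hr0 : ∀ i, 0 ≤ r i := fun i => div_nonneg
    (mul_nonneg (pin_nonneg hν hs0.le _) hB.le) (mul_nonneg hA.le (pin_nonneg hμ hs0.le _))
  set x : V → ℝ := fun i => r i ^ ((C : ℝ)⁻¹) with hx
  have hx0 : ∀ i, 0 ≤ x i := fun i => Real.rpow_nonneg (hr0 i) _
  have hxC : ∀ i, x i ^ C = r i := fun i => Real.rpow_inv_natCast_pow (hr0 i) hC
  set X : ℝ := (∑ i ∈ Finset.univ \ T,
    (s * pin ν s (insert i T) / A - s * pin μ s (insert i T) / B)) / C with hX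
  have hgenx := hgen s hs0 hs1 T hB0 x hx0
  have hXeq : (∑ i ∈ Finset.univ \ T,
      s * pin μ s (insert i T) / B * (x i ^ C - 1)) / C = X := by
    rw [hX]
    congr 1
    apply Finset.sum_congr rfl
    intro i _
    rw [hxC, hr]
    by_cases hBi : pin μ s (insert i T) = 0
    · rw [hBi, pin_ac hμ hac hs0 hBi]
      simp
    · field_simp
  rw [← hBdef, hXeq] at hgenx
  set k : ℝ := A / (B * Real.exp X) with hk
  have hk0 : 0 < k := div_pos hA (mul_pos hB (Real.exp_pos X))
  -- on the support of `ν` all the factors `x v` are positive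
  have hAi : ∀ σ, T ⊆ σ → ν σ ≠ 0 → ∀ i ∈ σ \ T, pin ν s (insert i T) ≠ 0 := by
    intro σ hσ hne i hi h
    exact hne (eq_zero_of_pin hν hs0 h σ
      (Finset.insert_subset (Finset.mem_sdiff.1 hi).1 hσ))
  have hrpos : ∀ i, pin ν s (insert i T) ≠ 0 → 0 < r i := by
    intro i h
    have h' : pin μ s (insert i T) ≠ 0 := fun h' => h (pin_ac hμ hac hs0 h')
    exact lt_of_le_of_ne (hr0 i)
      (Ne.symm (div_ne_zero (mul_ne_zero h hB.ne') (mul_ne_zero hA.ne' h')))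
  have hterm : ∀ σ : Finset V,
      (if T ⊆ σ then ν σ * s ^ (σ \ T).card else 0) -
        k * (if T ⊆ σ then μ σ * s ^ (σ \ T).card * ∏ v ∈ σ \ T, x v else 0) ≤
      if T ⊆ σ then ν σ * s ^ (σ \ T).card * (Real.log (ν σ / μ σ) - llr ν μ s T + X -
        ∑ i ∈ σ \ T, Real.log (x i)) else 0 := by
    intro σ
    by_cases hσ : T ⊆ σ
    · simp only [if_pos hσ]
      have hsk : 0 < s ^ (σ \ T).card := pow_pos hs0 _
      by_cases hνσ : ν σ = 0
      · rw [hνσ]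
        have : 0 ≤ k * (μ σ * s ^ (σ \ T).card * ∏ v ∈ σ \ T, x v) :=
          mul_nonneg hk0.le (mul_nonneg (mul_nonneg (hμ σ) hsk.le)
            (Finset.prod_nonneg fun v _ => hx0 v))
        simp only [zero_mul]
        linarith
      · have hμσ : μ σ ≠ 0 := fun h => hνσ (hac σ h)
        have hxpos : ∀ i ∈ σ \ T, 0 < x i := fun i hi =>
          Real.rpow_pos_of_pos (hrpos i (hAi σ hσ hνσ i hi)) _
        have hP : 0 < ∏ v ∈ σ \ T, x v := Finset.prod_pos hxpos
        have h := kl_term_ge (mul_nonneg (hν σ) hsk.le)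
          (mul_nonneg hk0.le (mul_nonneg (mul_nonneg (hμ σ) hsk.le) hP.le))
          (fun h => absurd h (mul_ne_zero hk0.ne'
            (mul_ne_zero (mul_ne_zero hμσ hsk.ne') hP.ne')))
        refine h.trans (le_of_eq ?_)
        congr 1
        have e : ν σ * s ^ (σ \ T).card / (k * (μ σ * s ^ (σ \ T).card * ∏ v ∈ σ \ T, x v)) =
            (ν σ / μ σ) / (A / B) * Real.exp X / ∏ v ∈ σ \ T, x v := by
          rw [hk]
          field_simp
        have hq : ν σ / μ σ ≠ 0 := div_ne_zero hνσ hμσ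
        have hAB : A / B ≠ 0 := div_ne_zero hA.ne' hB.ne'
        rw [e, Real.log_div (mul_ne_zero (div_ne_zero hq hAB) (Real.exp_ne_zero X)) hP.ne',
          Real.log_mul (div_ne_zero hq hAB) (Real.exp_ne_zero X), Real.log_div hq hAB,
          Real.log_exp, Real.log_prod fun i hi => (hxpos i hi).ne']
        rfl
    · simp [if_neg hσ]
  have hsum := Finset.sum_le_sum fun σ (_ : σ ∈ Finset.univ) => hterm σ
  rw [Finset.sum_sub_distrib, ← Finset.mul_sum] at hsum
  have hkle : k * ∑ σ, (if T ⊆ σ then μ σ * s ^ (σ \ T).card * ∏ v ∈ σ \ T, x v else 0) ≤ A := by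
    refine (mul_le_mul_of_nonneg_left hgenx hk0.le).trans (le_of_eq ?_)
    rw [hk]
    have := Real.exp_pos X
    field_simp
  have hlhs : ∑ σ, (if T ⊆ σ then ν σ * s ^ (σ \ T).card else 0) = A := rfl
  set R := ∑ σ, (if T ⊆ σ then
        ν σ * s ^ (σ \ T).card * (Real.log (ν σ / μ σ) - llr ν μ s T) else 0) with hR
  have hrhs : ∑ σ, (if T ⊆ σ then ν σ * s ^ (σ \ T).card *
        (Real.log (ν σ / μ σ) - llr ν μ s T + X - ∑ i ∈ σ \ T, Real.log (x i)) else 0) =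
      R + A * X - ∑ i ∈ Finset.univ \ T, s * pin ν s (insert i T) * Real.log (x i) := by
    have e1 : ∑ i ∈ Finset.univ \ T, s * pin ν s (insert i T) * Real.log (x i) =
        ∑ σ, (if T ⊆ σ then ν σ * s ^ (σ \ T).card * ∑ i ∈ σ \ T, Real.log (x i) else 0) := by
      rw [Finset.sum_congr rfl fun i hi => by
        rw [pin_insert ν s (Finset.mem_sdiff.1 hi).2, Finset.sum_mul]]
      rw [Finset.sum_comm]
      apply Finset.sum_congr rfl
      intro σ _
      by_cases hσ : T ⊆ σ
      · simp only [if_pos hσ]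
        rw [Finset.mul_sum, ← Finset.sum_subset
          (Finset.sdiff_subset_sdiff (Finset.subset_univ σ) (le_refl T))]
        · apply Finset.sum_congr rfl
          intro i hi
          rw [if_pos (Finset.mem_sdiff.1 hi).1, mul_one]
        · intro i hi hi'
          rw [if_neg fun h => hi' (Finset.mem_sdiff.2 ⟨h, (Finset.mem_sdiff.1 hi).2⟩)]
          ring
      · simp [if_neg hσ]
    rw [e1, hR, ← hlhs, Finset.sum_mul, ← Finset.sum_add_distrib, ← Finset.sum_sub_distrib]
    apply Finset.sum_congr rfl
    intro σ _
    split_ifs <;> ring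
  rw [hrhs, hlhs] at hsum
  have hmain : ∑ i ∈ Finset.univ \ T, s * pin ν s (insert i T) * Real.log (x i) - A * X ≤ R := by
    linarith
  have hlog : ∀ i, C * (s * pin ν s (insert i T) * Real.log (x i)) =
      s * pin ν s (insert i T) * (llr ν μ s (insert i T) - llr ν μ s T) := by
    intro i
    by_cases h : pin ν s (insert i T) = 0
    · rw [h]
      ring
    · have h' : pin μ s (insert i T) ≠ 0 := fun h' => h (pin_ac hμ hac hs0 h')
      have e : r i = (pin ν s (insert i T) / pin μ s (insert i T)) / (A / B) := by
        rw [hr]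
        field_simp
      have hxl : C * Real.log (x i) = llr ν μ s (insert i T) - llr ν μ s T := by
        rw [hx]
        simp only
        rw [Real.log_rpow (hrpos i h), ← mul_assoc, mul_inv_cancel₀ hC0.ne', one_mul, e,
          Real.log_div (div_ne_zero h h') (div_ne_zero hA.ne' hB.ne')]
        rfl
      rw [← hxl]
      ring
  have hCX : C * (A * X) = ∑ i ∈ Finset.univ \ T,
      (s * pin ν s (insert i T) - A * (s * pin μ s (insert i T) / B)) := by
    have e : C * (A * X) = A * ∑ i ∈ Finset.univ \ T,
        (s * pin ν s (insert i T) / A - s * pin μ s (insert i T) / B) := by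
      rw [hX]
      generalize ∑ i ∈ Finset.univ \ T,
        (s * pin ν s (insert i T) / A - s * pin μ s (insert i T) / B) = y
      field_simp
    rw [e, Finset.mul_sum]
    apply Finset.sum_congr rfl
    intro i _
    field_simp
  refine le_trans (le_of_eq ?_) (mul_le_mul_of_nonneg_left hmain hC0.le)
  rw [mul_sub, hCX, Finset.mul_sum, ← Finset.sum_sub_distrib]
  apply Finset.sum_congr rfl
  intro i _
  rw [hlog]
  ring

lemma hardcore_nonneg (G : SimpleGraph V) {lam : V → ℝ} (hl : ∀ v, 0 < lam v) (σ : Finset V) :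
    0 ≤ hardcore G lam σ :=
  div_nonneg (hcWeight_nonneg G (fun v => (hl v).le) σ)
    (sum_hcWeight_pos G fun v => (hl v).le).le

lemma hardcore_sum (G : SimpleGraph V) {lam : V → ℝ} (hl : ∀ v, 0 < lam v) :
    ∑ σ, hardcore G lam σ = 1 := by
  unfold hardcore
  rw [← Finset.sum_div, div_self (sum_hcWeight_pos G fun v => (hl v).le).ne']

lemma hardcore_eq_zero_iff (G : SimpleGraph V) {lam : V → ℝ} (hl : ∀ v, 0 < lam v)
    (σ : Finset V) : hardcore G lam σ = 0 ↔ ¬ IndepSet G σ := by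
  rw [hardcore, div_eq_zero_iff, or_iff_left (sum_hcWeight_pos G fun v => (hl v).le).ne', hcWeight]
  constructor
  · intro h hi
    rw [if_pos hi] at h
    exact (Finset.prod_pos fun v _ => hl v).ne' h
  · intro h
    rw [if_neg h]

/-- Entropic independence of the subcritical hardcore model under all pinnings and tilts. -/
lemma entIndep_hardcore (G : SimpleGraph V) {lam : V → ℝ} (hl : ∀ v, 0 < lam v) {m : ℕ}
    (hm : 1 ≤ m) (hdeg : ∀ v, (nbrs G Finset.univ v).card ≤ m + 2) {δ : ℝ} (hδ0 : 0 < δ)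
    (hδ1 : δ < 1) (hle : ∀ v, lam v ≤ (1 - δ) * hcCrit (m + 2)) (hC : expC δ ≠ 0)
    {ν : Finset V → ℝ} (hν : ∀ σ, 0 ≤ ν σ) (hac : ∀ σ, hardcore G lam σ = 0 → ν σ = 0) :
    EntIndep (expC δ) ν (hardcore G lam) := by
  apply entIndep_of_gen hC hν (hardcore_nonneg G hl) hac
  intro s hs0 hs1 T hT x hx
  refine pin_gen_le G hl hm hdeg hδ0 hδ1 hle hs0 hs1 ?_ x hx
  by_contra hTi
  apply hT
  apply pin_eq_zero
  intro σ hσ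
  rw [hardcore_eq_zero_iff G hl]
  exact fun h => hTi fun u hu w hw => h u (hσ hu) w (hσ hw)

/-! ### Field dynamics and systematic scan -/

/-- Second half of a field dynamics step: from the pinned set `T`, draw a configuration
containing `T` from the tilted measure. -/
def unpin (θ : ℝ) (μ : Finset V → ℝ) (T σ : Finset V) : ℝ :=
  (if T ⊆ σ then hcTiltWeight θ μ σ else 0) /
    ∑ τ ∈ Finset.univ.filter (fun τ : Finset V => T ⊆ τ), hcTiltWeight θ μ τ

lemma stepDist_fieldDyn (θ : ℝ) (μ π : Finset V → ℝ) (σ' : Finset V) :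
    stepDist π (fieldDyn θ μ) σ' =
      ∑ T : Finset V, ((1 - θ) ^ T.card * pin π θ T) * unpin θ μ T σ' := by
  have h1 : ∀ σ, fieldDyn θ μ σ σ' = ∑ T : Finset V,
      (if T ⊆ σ then θ ^ (σ \ T).card * (1 - θ) ^ T.card else 0) * unpin θ μ T σ' := by
    intro σ
    unfold fieldDyn
    refine Finset.sum_bij' (fun S _ => Finset.univ \ S) (fun T _ => Finset.univ \ T)
      (fun _ _ => Finset.mem_univ _) (fun _ _ => Finset.mem_univ _) (fun S _ => by simp)
      (fun T _ => by simp) fun S _ => ?_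
    have e2 : Finset.univ \ S ⊆ σ ↔ Finset.univ \ σ ⊆ S := by
      rw [← Finset.compl_eq_univ_sdiff, ← Finset.compl_eq_univ_sdiff]
      exact compl_le_iff_compl_le
    have e3 : σ \ (Finset.univ \ S) = S ∩ σ := by
      ext u
      simp [and_comm]
    rw [unpin, e3]
    congr 1
    by_cases h : Finset.univ \ S ⊆ σ
    · have e4 : σ \ S = Finset.univ \ S := by
        ext u
        simp only [Finset.mem_sdiff, Finset.mem_univ, true_and]
        exact ⟨fun h' => h'.2, fun h' => ⟨h (Finset.mem_sdiff.2 ⟨Finset.mem_univ u, h'⟩), h'⟩⟩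
      rw [if_pos (e2.1 h), if_pos h, e4]
    · rw [if_neg fun h' => h (e2.2 h'), if_neg h]
  unfold stepDist
  simp_rw [h1, Finset.mul_sum]
  rw [Finset.sum_comm]
  apply Finset.sum_congr rfl
  intro T _
  rw [pin, Finset.mul_sum, Finset.sum_mul]
  apply Finset.sum_congr rfl
  intro σ _
  split_ifs <;> ring

lemma pin_mul_pow (μ : Finset V → ℝ) (θ : ℝ) (T : Finset V) :
    ∑ τ ∈ Finset.univ.filter (fun τ : Finset V => T ⊆ τ), hcTiltWeight θ μ τ =
      θ ^ T.card * pin μ θ T := by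
  rw [Finset.sum_filter, pin, Finset.mul_sum]
  apply Finset.sum_congr rfl
  intro τ _
  split_ifs with h
  · rw [hcTiltWeight, ← Finset.card_sdiff_add_card_eq_card h, pow_add]
    ring
  · rw [mul_zero]

/-- `μ` is stationary for the field dynamics. -/
lemma field_stationary {μ : Finset V → ℝ} (hμ : ∀ σ, 0 ≤ μ σ) {θ : ℝ} (hθ : 0 < θ)
    (σ' : Finset V) :
    ∑ T : Finset V, ((1 - θ) ^ T.card * pin μ θ T) * unpin θ μ T σ' = μ σ' := by
  have h1 : ∀ T : Finset V, ((1 - θ) ^ T.card * pin μ θ T) * unpin θ μ T σ' =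
      if T ⊆ σ' then (1 - θ) ^ T.card * θ ^ (σ'.card - T.card) * μ σ' else 0 := by
    intro T
    rw [unpin, pin_mul_pow]
    by_cases h : T ⊆ σ'
    · rw [if_pos h, if_pos h]
      by_cases h0 : pin μ θ T = 0
      · rw [h0, eq_zero_of_pin hμ hθ h0 σ' h]
        simp
      · have hθT : θ ^ T.card ≠ 0 := (pow_pos hθ _).ne'
        rw [hcTiltWeight, ← Finset.card_sdiff_add_card_eq_card h, pow_add, Nat.add_sub_cancel]
        field_simp
    · rw [if_neg h, if_neg h]
      simp
  have h2 : ∑ T ∈ σ'.powerset, (1 - θ) ^ T.card * θ ^ (σ'.card - T.card) = 1 := by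
    rw [Finset.sum_pow_mul_eq_add_pow]
    simp
  rw [Finset.sum_congr rfl fun T _ => h1 T, ← Finset.sum_filter]
  have h3 : Finset.univ.filter (fun T => T ⊆ σ') = σ'.powerset := by
    ext T
    simp
  rw [h3, ← Finset.sum_mul, h2, one_mul]

/-- The entropy after a field dynamics step is at most the entropy of the pinned set. -/
lemma KLdiv_fieldDyn_le {π μ : Finset V → ℝ} (hπ : ∀ σ, 0 ≤ π σ) (hμ : ∀ σ, 0 ≤ μ σ)
    (hac : ∀ σ, μ σ = 0 → π σ = 0) {θ : ℝ} (hθ0 : 0 < θ) (hθ1 : θ < 1) :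
    KLdiv (stepDist π (fieldDyn θ μ)) μ ≤ pinKL π μ θ := by
  have h1 : stepDist π (fieldDyn θ μ) = fun σ' =>
      ∑ T : Finset V, ((1 - θ) ^ T.card * pin π θ T) * unpin θ μ T σ' :=
    funext fun σ' => stepDist_fieldDyn θ μ π σ'
  have h2 : μ = fun σ' => ∑ T : Finset V, ((1 - θ) ^ T.card * pin μ θ T) * unpin θ μ T σ' :=
    funext fun σ' => (field_stationary hμ hθ0 σ').symm
  have hpow : ∀ T : Finset V, 0 < (1 - θ) ^ T.card := fun T => pow_pos (by linarith) _
  have htilt : ∀ τ : Finset V, 0 ≤ hcTiltWeight θ μ τ := fun τ =>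
    mul_nonneg (pow_nonneg hθ0.le _) (hμ τ)
  have h3 := data_processing (fun T : Finset V => (1 - θ) ^ T.card * pin π θ T)
    (fun T => (1 - θ) ^ T.card * pin μ θ T) (unpin θ μ)
    (fun T => mul_nonneg (hpow T).le (pin_nonneg hπ hθ0.le T))
    (fun T => mul_nonneg (hpow T).le (pin_nonneg hμ hθ0.le T))
    (fun T h => by
      rcases mul_eq_zero.1 h with h | h
      · exact absurd h (hpow T).ne'
      · simp only [pin_ac hμ hac hθ0 h, mul_zero])
    (fun T σ => by
      unfold unpin
      apply div_nonneg
      · split_ifs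
        · exact htilt σ
        · exact le_rfl
      · exact Finset.sum_nonneg fun τ _ => htilt τ)
    (fun T h => by
      unfold unpin
      rw [← Finset.sum_div, ← Finset.sum_filter]
      apply div_self
      rw [pin_mul_pow]
      refine mul_ne_zero (pow_pos hθ0 _).ne' fun h' => h ?_
      simp only [pin_ac hμ hac hθ0 h', mul_zero])
  rw [← h1, ← h2] at h3
  refine h3.trans (le_of_eq ?_)
  unfold KLdiv pinKL llr
  apply Finset.sum_congr rfl
  intro T _
  rw [mul_div_mul_left _ _ (hpow T).ne', mul_assoc]

lemma sum_erase_eq (v : V) (ρ : Finset V) (f : Finset V → ℝ) :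
    ∑ τ : Finset V, (if τ.erase v = ρ.erase v then f τ else 0) =
      f (insert v (ρ.erase v)) + f (ρ.erase v) := by
  have h : Finset.univ.filter (fun τ : Finset V => τ.erase v = ρ.erase v) =
      {insert v (ρ.erase v), ρ.erase v} := by
    ext τ
    simp only [Finset.mem_filter, Finset.mem_univ, true_and, Finset.mem_insert,
      Finset.mem_singleton]
    constructor
    · intro h
      rw [← h]
      by_cases hv : v ∈ τ
      · exact Or.inl (Finset.insert_erase hv).symm
      · exact Or.inr (Finset.erase_eq_of_notMem hv).symm
    · rintro (h | h)
      · rw [h, Finset.erase_insert (Finset.notMem_erase v ρ)]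
      · rw [h, Finset.erase_idem]
  rw [← Finset.sum_filter, h, Finset.sum_pair]
  intro h'
  exact Finset.notMem_erase v ρ (h' ▸ Finset.mem_insert_self v (ρ.erase v))

lemma eq_zero_of_site_eq_zero {μ : Finset V → ℝ} (hμ : ∀ σ, 0 ≤ μ σ) (v : V) (σ : Finset V)
    (h : μ (insert v (σ.erase v)) + μ (σ.erase v) = 0) : μ σ = 0 := by
  have h1 := hμ (insert v (σ.erase v))
  have h2 := hμ (σ.erase v)
  by_cases hv : v ∈ σ
  · rw [Finset.insert_erase hv] at h h1
    linarith
  · rw [Finset.erase_eq_of_notMem hv] at h h2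
    rw [Finset.erase_eq_of_notMem hv] at h1
    linarith

lemma siteUpdate_nonneg {μ : Finset V → ℝ} (hμ : ∀ σ, 0 ≤ μ σ) (v : V) (σ τ : Finset V) :
    0 ≤ siteUpdate μ v σ τ := by
  unfold siteUpdate
  split_ifs
  · exact div_nonneg (hμ τ) (add_nonneg (hμ _) (hμ _))
  · exact le_rfl

lemma siteUpdate_row {μ : Finset V → ℝ} (hμ : ∀ σ, 0 ≤ μ σ) (v : V) {σ : Finset V}
    (hσ : μ σ ≠ 0) : ∑ τ, siteUpdate μ v σ τ = 1 := by
  unfold siteUpdate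
  rw [sum_erase_eq v σ fun τ => μ τ / (μ (insert v (σ.erase v)) + μ (σ.erase v)), ← add_div]
  exact div_self fun h => hσ (eq_zero_of_site_eq_zero hμ v σ h)

lemma site_stationary {μ : Finset V → ℝ} (hμ : ∀ σ, 0 ≤ μ σ) (v : V) :
    stepDist μ (siteUpdate μ v) = μ := by
  funext τ
  unfold stepDist
  have h1 : ∀ σ : Finset V, μ σ * siteUpdate μ v σ τ = if σ.erase v = τ.erase v then
      μ σ * (μ τ / (μ (insert v (τ.erase v)) + μ (τ.erase v))) else 0 := by
    intro σ
    unfold siteUpdate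
    by_cases h : σ.erase v = τ.erase v
    · rw [if_pos h, if_pos h.symm, h]
    · rw [if_neg h, if_neg fun h' => h h'.symm, mul_zero]
  rw [Finset.sum_congr rfl fun σ _ => h1 σ, sum_erase_eq v τ fun σ =>
    μ σ * (μ τ / (μ (insert v (τ.erase v)) + μ (τ.erase v))), ← add_mul]
  by_cases h : μ (insert v (τ.erase v)) + μ (τ.erase v) = 0
  · rw [h, zero_mul, eq_zero_of_site_eq_zero hμ v τ h]
  · exact mul_div_cancel₀ _ h

/-- The systematic scan preserves probability distributions absolutely continuous with respect to
the stationary measure `μ`, and does not increase the relative entropy. -/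
lemma scanDist_spec {μ : Finset V → ℝ} (hμ : ∀ σ, 0 ≤ μ σ) (l : List V) :
    ∀ ν : Finset V → ℝ, (∀ σ, 0 ≤ ν σ) → ∑ σ, ν σ = 1 → (∀ σ, μ σ = 0 → ν σ = 0) →
      (∀ σ, 0 ≤ scanDist μ l ν σ) ∧ ∑ σ, scanDist μ l ν σ = 1 ∧
      (∀ σ, μ σ = 0 → scanDist μ l ν σ = 0) ∧ KLdiv (scanDist μ l ν) μ ≤ KLdiv ν μ := by
  induction l with
  | nil => exact fun ν h1 h2 h3 => ⟨h1, h2, h3, le_rfl⟩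
  | cons v l ih =>
    intro ν h1 h2 h3
    have hrow : ∀ σ, ν σ ≠ 0 → ∑ τ, siteUpdate μ v σ τ = 1 := fun σ hσ =>
      siteUpdate_row hμ v fun h => hσ (h3 σ h)
    have hdp := data_processing ν μ (siteUpdate μ v) h1 hμ h3 (siteUpdate_nonneg hμ v) hrow
    have hdp' : KLdiv (stepDist ν (siteUpdate μ v)) μ ≤ KLdiv ν μ := by
      have e : (fun y => ∑ x, μ x * siteUpdate μ v x y) = μ := site_stationary hμ v
      rw [e] at hdp
      exact hdp
    obtain ⟨k1, k2, k3, k4⟩ := ih (stepDist ν (siteUpdate μ v))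
      (fun τ => Finset.sum_nonneg fun σ _ => mul_nonneg (h1 σ) (siteUpdate_nonneg hμ v σ τ))
      (by
        unfold stepDist
        rw [Finset.sum_comm, ← h2]
        apply Finset.sum_congr rfl
        intro σ _
        rw [← Finset.mul_sum]
        by_cases hσ : ν σ = 0
        · rw [hσ, zero_mul]
        · rw [hrow σ hσ, mul_one])
      (fun τ hτ => Finset.sum_eq_zero fun σ _ => by
        unfold siteUpdate
        rw [hτ, zero_div, ite_self, mul_zero])
    exact ⟨k1, k2, k3, k4.trans hdp'⟩

/-- Restricted entropy contraction for one pass of the systematic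
scan followed by one step of the field dynamics at `θ = 1/10`, for `δ`-unique
hardcore models, uniformly over starting distributions supported on independent
sets. -/
theorem scan_field_dynamics_entropy_contraction :
    ∀ δ : ℝ, δ ∈ Set.Ioo (0 : ℝ) 1 →
    ∃ κ : ℝ, κ ∈ Set.Ioo (0 : ℝ) 1 ∧
      ∀ (V : Type) [Fintype V] [DecidableEq V] (G : SimpleGraph V)
        [DecidableRel G.Adj] (Δ : ℕ), 3 ≤ Δ →
        (∀ v : V, G.degree v ≤ Δ) →
        ∀ lam : V → ℝ, (∀ v, 0 < lam v) → (∀ v, lam v ≤ (1 - δ) * hcCrit Δ) →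
        ∀ l : List V, l.Nodup → (∀ v : V, v ∈ l) →
        ∀ ν : Finset V → ℝ, (∀ σ, 0 ≤ ν σ) → (∑ σ : Finset V, ν σ) = 1 →
          (∀ σ, ¬ IndepSet G σ → ν σ = 0) →
          KLdiv
              (stepDist (scanDist (hardcore G lam) l ν)
                (fieldDyn (1 / 10) (hardcore G lam)))
              (hardcore G lam) ≤
            (1 - κ) * KLdiv ν (hardcore G lam) := by
  intro δ hδ
  have hC : expC δ ≠ 0 := by
    apply Nat.pos_iff_ne_zero.1
    apply Nat.ceil_pos.2
    have : 0 < δ := hδ.1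
    positivity
  have hκ1 : ((1 : ℝ) / 10) ^ expC δ < 1 := pow_lt_one₀ (by norm_num) (by norm_num) hC
  refine ⟨(1 / 10) ^ expC δ, ⟨by positivity, hκ1⟩, ?_⟩
  intro V _ _ G _ Δ hΔ hdeg lam hl hle l _ _ ν hν hν1 hνi
  obtain ⟨m, rfl⟩ : ∃ m, Δ = m + 2 := ⟨Δ - 2, by omega⟩
  have hdeg' : ∀ v, (nbrs G Finset.univ v).card ≤ m + 2 := by
    intro v
    refine le_trans (le_of_eq ?_) (hdeg v)
    rw [← SimpleGraph.card_neighborFinset_eq_degree]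
    congr 1
    ext u
    simp [nbrs]
  have hμ := hardcore_nonneg G hl
  obtain ⟨h1, h2, h3, h4⟩ := scanDist_spec hμ l ν hν hν1
    fun σ h => hνi σ ((hardcore_eq_zero_iff G hl σ).1 h)
  have hEI := entIndep_hardcore G hl (by omega) hdeg' hδ.1 hδ.2 hle hC h1 h3
  calc KLdiv (stepDist (scanDist (hardcore G lam) l ν) (fieldDyn (1 / 10) (hardcore G lam)))
        (hardcore G lam)
      ≤ pinKL (scanDist (hardcore G lam) l ν) (hardcore G lam) (1 / 10) :=
        KLdiv_fieldDyn_le h1 hμ h3 (by norm_num) (by norm_num)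
    _ ≤ (1 - (1 / 10) ^ expC δ) * KLdiv (scanDist (hardcore G lam) l ν) (hardcore G lam) :=
        pinKL_le h1 hμ h2 (hardcore_sum G hl) h3 hEI (by norm_num) (by norm_num)
    _ ≤ (1 - (1 / 10) ^ expC δ) * KLdiv ν (hardcore G lam) :=
        mul_le_mul_of_nonneg_left h4 (by linarith)
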